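/- arXiv:2103.07698 — 2 statements merged into one kernel-verified Lean document; each statement's English description precedes it below -/
import Mathlib

section
/- For every τ in the complex upper half plane, E_{3,4}(τ) = −54·E_{1,−3}(τ)·(E_{3,−3,1}(τ) + 3·E_{3,1,−3}(τ)); equivalently, E_{3,4}/E_{3,2}^{1/2} = −9(E_{3,−3,1} + 3E_{3,1,−3}), since E_{3,2}^{1/2} = 6E_{1,−3}. -/
open Complex

/-- `q = exp(2πiτ)`. -/
noncomputable def qq (τ : ℂ) : ℂ := Complex.exp (2 * Real.pi * Complex.I * τ)

/-- `σ_k(n) = Σ_{d ∣ n} d^k`, as a complex number. -/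
noncomputable def sigmaC (k n : ℕ) : ℂ := ∑ d ∈ n.divisors, (d : ℂ) ^ k

/-- Eisenstein series `E₂(τ) = 1 - 24 Σ_{n≥1} σ₁(n) qⁿ`. -/
noncomputable def E₂ (τ : ℂ) : ℂ := 1 - 24 * ∑' n : ℕ, sigmaC 1 (n + 1) * qq τ ^ (n + 1)

/-- Eisenstein series `E₄(τ) = 1 + 240 Σ_{n≥1} σ₃(n) qⁿ`. -/
noncomputable def E₄ (τ : ℂ) : ℂ := 1 + 240 * ∑' n : ℕ, sigmaC 3 (n + 1) * qq τ ^ (n + 1)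

/-- Eisenstein series `E₆(τ) = 1 - 504 Σ_{n≥1} σ₅(n) qⁿ`. -/
noncomputable def E₆ (τ : ℂ) : ℂ := 1 - 504 * ∑' n : ℕ, sigmaC 5 (n + 1) * qq τ ^ (n + 1)

/-- Dedekind eta function `η(τ) = exp(πiτ/12) ∏_{n≥1} (1 - qⁿ)`. -/
noncomputable def η (τ : ℂ) : ℂ :=
  Complex.exp (Real.pi * Complex.I * τ / 12) * ∏' n : ℕ, (1 - qq τ ^ (n + 1))

/-- Theta function `θ(τ) = Σ_{n ∈ ℤ} q^{n²}`. -/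
noncomputable def θ (τ : ℂ) : ℂ := ∑' n : ℤ, qq τ ^ (n ^ 2)

/-- The character `χ₋₄`: `χ₋₄(d) = 1, -1, 0` according as `d ≡ 1, 3, 0/2 (mod 4)`. -/
noncomputable def χ₄ (d : ℕ) : ℂ := if d % 4 = 1 then 1 else if d % 4 = 3 then -1 else 0

/-- The character `χ₋₃`: `χ₋₃(d) = 1, -1, 0` according as `d ≡ 1, 2, 0 (mod 3)`. -/
noncomputable def χ₃ (d : ℕ) : ℂ := if d % 3 = 1 then 1 else if d % 3 = 2 then -1 else 0

/-- `E_{1,-4}(τ) = 1/4 + Σ_{n≥1} (Σ_{d∣n} χ₋₄(d)) qⁿ`. -/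
noncomputable def E₁₄ (τ : ℂ) : ℂ :=
  1 / 4 + ∑' n : ℕ, (∑ d ∈ (n + 1).divisors, χ₄ d) * qq τ ^ (n + 1)

/-- `E_{1,-3}(τ) = 1/6 + Σ_{n≥1} (Σ_{d∣n} χ₋₃(d)) qⁿ`. -/
noncomputable def E₁₃ (τ : ℂ) : ℂ :=
  1 / 6 + ∑' n : ℕ, (∑ d ∈ (n + 1).divisors, χ₃ d) * qq τ ^ (n + 1)

/-- `E_{2,2}(τ) = 2E₂(2τ) - E₂(τ)`. -/
noncomputable def E₂₂ (τ : ℂ) : ℂ := 2 * E₂ (2 * τ) - E₂ τ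

/-- `E_{2,4}(τ) = (4E₄(2τ) - E₄(τ))/3`. -/
noncomputable def E₂₄ (τ : ℂ) : ℂ := (4 * E₄ (2 * τ) - E₄ τ) / 3

/-- `E_{3,2}(τ) = (3E₂(3τ) - E₂(τ))/2`. -/
noncomputable def E₃₂ (τ : ℂ) : ℂ := (3 * E₂ (3 * τ) - E₂ τ) / 2

/-- `E_{3,4}(τ) = (9E₄(3τ) - E₄(τ))/8`. -/
noncomputable def E₃₄ (τ : ℂ) : ℂ := (9 * E₄ (3 * τ) - E₄ τ) / 8

/-- `E_{4,2}(τ) = (4E₂(4τ) - E₂(τ))/3`. -/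
noncomputable def E₄₂ (τ : ℂ) : ℂ := (4 * E₂ (4 * τ) - E₂ τ) / 3

/-- `E'_{4,2}(τ) = 4E₂(4τ) - 4E₂(2τ) + E₂(τ)`. -/
noncomputable def E₄₂' (τ : ℂ) : ℂ := 4 * E₂ (4 * τ) - 4 * E₂ (2 * τ) + E₂ τ

/-- `f_{1,j}(τ) = 2E₂(τ) - ((3+(-1)ʲi√3)/6)E₂(τ/2) - ((3-(-1)ʲi√3)/6)E₂((τ+1)/2)`. -/
noncomputable def f₁ (j : ℕ) (τ : ℂ) : ℂ :=
  2 * E₂ τ - ((3 + (-1 : ℂ) ^ j * Complex.I * Real.sqrt 3) / 6) * E₂ (τ / 2)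
    - ((3 - (-1 : ℂ) ^ j * Complex.I * Real.sqrt 3) / 6) * E₂ ((τ + 1) / 2)

/-- `g_{1,j}(τ) = (3/2)E₂(τ) - (1/4) Σ_{0≤m≤2, m≢j (mod 3)} E₂((τ+m)/3)`. -/
noncomputable def g₁ (j : ℕ) (τ : ℂ) : ℂ :=
  (3 / 2) * E₂ τ -
    (1 / 4) * ∑ m ∈ (Finset.range 3).filter (fun m => ¬ m % 3 = j % 3), E₂ ((τ + m) / 3)

/-- `f_{2,j}(τ) = 4E_{1,-4}(τ) + (-1)ʲ·2i·(E_{1,-4}(τ/2) - E_{1,-4}((τ+1)/2))`. -/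
noncomputable def f₂ (j : ℕ) (τ : ℂ) : ℂ :=
  4 * E₁₄ τ + (-1 : ℂ) ^ j * 2 * Complex.I * (E₁₄ (τ / 2) - E₁₄ ((τ + 1) / 2))

/-- `f_{3,j}(τ) = 6E_{1,-3}(2τ) + (-1)ʲ·i√3·(E_{1,-3}(τ/2) - E_{1,-3}((τ+1)/2))`. -/
noncomputable def f₃ (j : ℕ) (τ : ℂ) : ℂ :=
  6 * E₁₃ (2 * τ) +
    (-1 : ℂ) ^ j * Complex.I * Real.sqrt 3 * (E₁₃ (τ / 2) - E₁₃ ((τ + 1) / 2))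

/-- `f_{4,j}(τ) = θ(τ/2 - (-1)ʲ/4)`. -/
noncomputable def f₄ (j : ℕ) (τ : ℂ) : ℂ := θ (τ / 2 - (-1 : ℂ) ^ j / 4)

/-- `g_{4,j}(τ) = 2θ(2τ)² - θ((τ+j)/2)²`. -/
noncomputable def g₄ (j : ℕ) (τ : ℂ) : ℂ := 2 * θ (2 * τ) ^ 2 - θ ((τ + j) / 2) ^ 2

/-- `E_{3,-3,1}(τ) = -1/9 + Σ_{n≥1} (Σ_{d∣n} d²χ₋₃(d)) qⁿ`. -/
noncomputable def E₃₃₁ (τ : ℂ) : ℂ :=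
  -(1 / 9) + ∑' n : ℕ, (∑ d ∈ (n + 1).divisors, (d : ℂ) ^ 2 * χ₃ d) * qq τ ^ (n + 1)

/-- `E_{3,1,-3}(τ) = Σ_{n≥1} (Σ_{d∣n} d²χ₋₃(n/d)) qⁿ`. -/
noncomputable def E₃₁₃ (τ : ℂ) : ℂ :=
  ∑' n : ℕ, (∑ d ∈ (n + 1).divisors, (d : ℂ) ^ 2 * χ₃ ((n + 1) / d)) * qq τ ^ (n + 1)

/-- The quadruples `(a, b, x, y)` of positive integers with `a * x + b * y = n`. -/
def quadruples (n : ℕ) : Finset (ℕ × ℕ × ℕ × ℕ) :=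
  (Finset.Icc 1 n ×ˢ Finset.Icc 1 n ×ˢ Finset.Icc 1 n ×ˢ Finset.Icc 1 n).filter
    fun p => p.1 * p.2.2.1 + p.2.1 * p.2.2.2 = n

lemma mem_quadruples {n : ℕ} {p : ℕ × ℕ × ℕ × ℕ} :
    p ∈ quadruples n ↔ (0 < p.1 ∧ 0 < p.2.1 ∧ 0 < p.2.2.1 ∧ 0 < p.2.2.2) ∧
      p.1 * p.2.2.1 + p.2.1 * p.2.2.2 = n := by
  obtain ⟨a, b, x, y⟩ := p
  simp only [quadruples, Finset.mem_filter, Finset.mem_product, Finset.mem_Icc]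
  constructor
  · rintro ⟨h, h'⟩
    exact ⟨by omega, h'⟩
  · rintro ⟨⟨ha, hb, hx, hy⟩, h⟩
    have h1 := Nat.le_mul_of_pos_right a hx
    have h2 := Nat.le_mul_of_pos_left x ha
    have h3 := Nat.le_mul_of_pos_right b hy
    have h4 := Nat.le_mul_of_pos_left y hb
    exact ⟨by omega, h⟩

/-- Splitting a sum over quadruples according to the order of `x` and `y`. -/
lemma sum_quadruples_split_right (n : ℕ) (H : ℕ → ℕ → ℕ → ℕ → ℂ) :
    ∑ p ∈ quadruples n, H p.1 p.2.1 p.2.2.1 p.2.2.2 =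
      ∑ p ∈ (quadruples n).filter (fun p => p.2.2.1 < p.2.2.2),
        (H p.1 p.2.1 p.2.2.1 p.2.2.2 + H p.2.1 p.1 p.2.2.2 p.2.2.1) +
      ∑ p ∈ (quadruples n).filter (fun p => p.2.2.1 = p.2.2.2),
        H p.1 p.2.1 p.2.2.1 p.2.2.2 := by
  have hswap : ∑ p ∈ (quadruples n).filter (fun p => p.2.2.1 < p.2.2.2),
        H p.2.1 p.1 p.2.2.2 p.2.2.1 =
      ∑ p ∈ (quadruples n).filter (fun p => p.2.2.2 < p.2.2.1),
        H p.1 p.2.1 p.2.2.1 p.2.2.2 := by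
    refine Finset.sum_nbij' (fun p => (p.2.1, p.1, p.2.2.2, p.2.2.1))
      (fun p => (p.2.1, p.1, p.2.2.2, p.2.2.1)) ?_ ?_ ?_ ?_ ?_
    all_goals
      rintro ⟨a, b, x, y⟩ hp
      simp only [Finset.mem_filter, mem_quadruples] at hp ⊢
      try omega
  rw [Finset.sum_add_distrib, hswap, Finset.sum_filter, Finset.sum_filter, Finset.sum_filter,
    ← Finset.sum_add_distrib, ← Finset.sum_add_distrib]
  refine Finset.sum_congr rfl fun p _ => ?_
  rcases lt_trichotomy p.2.2.1 p.2.2.2 with h | h | h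
  · simp [h, h.ne, h.not_gt]
  · simp [h]
  · simp [h, h.ne', h.not_gt]

/-- Splitting a sum over quadruples according to the order of `a` and `b`, and parametrizing the
two unequal parts by the quadruples with `x < y`. -/
lemma sum_quadruples_split_left (n : ℕ) (H : ℕ → ℕ → ℕ → ℕ → ℂ) :
    ∑ p ∈ quadruples n, H p.1 p.2.1 p.2.2.1 p.2.2.2 =
      ∑ p ∈ (quadruples n).filter (fun p => p.2.2.1 < p.2.2.2),
        (H (p.1 + p.2.1) p.2.1 p.2.2.1 (p.2.2.2 - p.2.2.1) +
          H p.2.1 (p.1 + p.2.1) (p.2.2.2 - p.2.2.1) p.2.2.1) +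
      ∑ p ∈ (quadruples n).filter (fun p => p.1 = p.2.1),
        H p.1 p.2.1 p.2.2.1 p.2.2.2 := by
  have hgt : ∑ p ∈ (quadruples n).filter (fun p => p.2.2.1 < p.2.2.2),
        H (p.1 + p.2.1) p.2.1 p.2.2.1 (p.2.2.2 - p.2.2.1) =
      ∑ p ∈ (quadruples n).filter (fun p => p.2.1 < p.1),
        H p.1 p.2.1 p.2.2.1 p.2.2.2 := by
    refine Finset.sum_nbij' (fun p => (p.1 + p.2.1, p.2.1, p.2.2.1, p.2.2.2 - p.2.2.1))
      (fun p => (p.1 - p.2.1, p.2.1, p.2.2.1, p.2.2.1 + p.2.2.2)) ?_ ?_ ?_ ?_ ?_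
    · rintro ⟨a, b, x, y⟩ hp
      simp only [Finset.mem_filter, mem_quadruples] at hp ⊢
      obtain ⟨⟨h, hn⟩, hlt⟩ := hp
      obtain ⟨c, rfl⟩ := Nat.exists_eq_add_of_lt hlt
      refine ⟨⟨by omega, ?_⟩, by omega⟩
      rw [show x + c + 1 - x = c + 1 by omega, ← hn]
      ring
    · rintro ⟨a, b, x, y⟩ hp
      simp only [Finset.mem_filter, mem_quadruples] at hp ⊢
      obtain ⟨⟨h, hn⟩, hlt⟩ := hp
      obtain ⟨c, rfl⟩ := Nat.exists_eq_add_of_lt hlt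
      refine ⟨⟨by omega, ?_⟩, by omega⟩
      rw [show b + c + 1 - b = c + 1 by omega, ← hn]
      ring
    all_goals
      rintro ⟨a, b, x, y⟩ hp
      simp only [Finset.mem_filter, mem_quadruples, Prod.mk.injEq, true_and] at hp ⊢
      try omega
  have hlt : ∑ p ∈ (quadruples n).filter (fun p => p.2.2.1 < p.2.2.2),
        H p.2.1 (p.1 + p.2.1) (p.2.2.2 - p.2.2.1) p.2.2.1 =
      ∑ p ∈ (quadruples n).filter (fun p => p.1 < p.2.1),
        H p.1 p.2.1 p.2.2.1 p.2.2.2 := by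
    refine Finset.sum_nbij' (fun p => (p.2.1, p.1 + p.2.1, p.2.2.2 - p.2.2.1, p.2.2.1))
      (fun p => (p.2.1 - p.1, p.1, p.2.2.2, p.2.2.1 + p.2.2.2)) ?_ ?_ ?_ ?_ ?_
    · rintro ⟨a, b, x, y⟩ hp
      simp only [Finset.mem_filter, mem_quadruples] at hp ⊢
      obtain ⟨⟨h, hn⟩, hlt⟩ := hp
      obtain ⟨c, rfl⟩ := Nat.exists_eq_add_of_lt hlt
      refine ⟨⟨by omega, ?_⟩, by omega⟩
      rw [show x + c + 1 - x = c + 1 by omega, ← hn]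
      ring
    · rintro ⟨a, b, x, y⟩ hp
      simp only [Finset.mem_filter, mem_quadruples] at hp ⊢
      obtain ⟨⟨h, hn⟩, hlt⟩ := hp
      obtain ⟨c, rfl⟩ := Nat.exists_eq_add_of_lt hlt
      refine ⟨⟨by omega, ?_⟩, by omega⟩
      rw [show a + c + 1 - a = c + 1 by omega, ← hn]
      ring
    all_goals
      rintro ⟨a, b, x, y⟩ hp
      simp only [Finset.mem_filter, mem_quadruples, Prod.mk.injEq, true_and, and_true] at hp ⊢
      try omega
  rw [Finset.sum_add_distrib, hgt, hlt, Finset.sum_filter, Finset.sum_filter, Finset.sum_filter,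
    ← Finset.sum_add_distrib, ← Finset.sum_add_distrib]
  refine Finset.sum_congr rfl fun p _ => ?_
  rcases lt_trichotomy p.1 p.2.1 with h | h | h
  · simp [h, h.ne, h.not_gt]
  · simp [h]
  · simp [h, h.ne', h.not_gt]

lemma sum_quadruples_right_eq (n : ℕ) (H : ℕ → ℕ → ℕ → ℕ → ℂ) :
    ∑ p ∈ (quadruples n).filter (fun p => p.2.2.1 = p.2.2.2), H p.1 p.2.1 p.2.2.1 p.2.2.2 =
      ∑ p ∈ n.divisorsAntidiagonal, ∑ a ∈ Finset.Ico 1 p.1, H a (p.1 - a) p.2 p.2 := by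
  rw [Finset.sum_sigma']
  refine Finset.sum_nbij' (fun p => ⟨(p.1 + p.2.1, p.2.2.1), p.1⟩)
    (fun s => (s.2, s.1.1 - s.2, s.1.2, s.1.2)) ?_ ?_ ?_ ?_ ?_
  · rintro ⟨a, b, x, y⟩ hp
    simp only [Finset.mem_filter, mem_quadruples, Finset.mem_sigma, Finset.mem_Ico,
      Nat.mem_divisorsAntidiagonal] at hp ⊢
    obtain ⟨⟨h, hn⟩, rfl⟩ := hp
    have := Nat.mul_pos h.1 h.2.2.1
    exact ⟨⟨by rw [← hn]; ring, by omega⟩, by omega⟩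
  · rintro ⟨⟨s, x⟩, a⟩ hp
    simp only [Finset.mem_filter, mem_quadruples, Finset.mem_sigma, Finset.mem_Ico,
      Nat.mem_divisorsAntidiagonal] at hp ⊢
    obtain ⟨⟨hn, h0⟩, h1, h2⟩ := hp
    have hx : 0 < x := Nat.pos_of_ne_zero fun hx => h0 (by rw [← hn, hx, mul_zero])
    refine ⟨⟨by omega, ?_⟩, trivial⟩
    rw [← add_mul, ← hn]
    congr 1
    omega
  · rintro ⟨a, b, x, y⟩ hp
    simp only [Finset.mem_filter, mem_quadruples, Prod.mk.injEq, true_and] at hp ⊢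
    omega
  · rintro ⟨⟨s, x⟩, a⟩ hp
    simp only [Finset.mem_sigma, Finset.mem_Ico] at hp ⊢
    rw [show a + (s - a) = s by omega]
  · rintro ⟨a, b, x, y⟩ hp
    simp only [Finset.mem_filter, mem_quadruples] at hp ⊢
    rw [show a + b - a = b by omega, hp.2]

lemma sum_quadruples_left_eq (n : ℕ) (H : ℕ → ℕ → ℕ → ℕ → ℂ) :
    ∑ p ∈ (quadruples n).filter (fun p => p.1 = p.2.1), H p.1 p.2.1 p.2.2.1 p.2.2.2 =
      ∑ p ∈ n.divisorsAntidiagonal, ∑ x ∈ Finset.Ico 1 p.2, H p.1 p.1 x (p.2 - x) := by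
  rw [Finset.sum_sigma']
  refine Finset.sum_nbij' (fun p => ⟨(p.1, p.2.2.1 + p.2.2.2), p.2.2.1⟩)
    (fun s => (s.1.1, s.1.1, s.2, s.1.2 - s.2)) ?_ ?_ ?_ ?_ ?_
  · rintro ⟨a, b, x, y⟩ hp
    simp only [Finset.mem_filter, mem_quadruples, Finset.mem_sigma, Finset.mem_Ico,
      Nat.mem_divisorsAntidiagonal] at hp ⊢
    obtain ⟨⟨h, hn⟩, rfl⟩ := hp
    have := Nat.mul_pos h.1 h.2.2.1
    exact ⟨⟨by rw [← hn]; ring, by omega⟩, by omega⟩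
  · rintro ⟨⟨d, m⟩, x⟩ hp
    simp only [Finset.mem_filter, mem_quadruples, Finset.mem_sigma, Finset.mem_Ico,
      Nat.mem_divisorsAntidiagonal] at hp ⊢
    obtain ⟨⟨hn, h0⟩, h1, h2⟩ := hp
    have hd : 0 < d := Nat.pos_of_ne_zero fun hd => h0 (by rw [← hn, hd, zero_mul])
    refine ⟨⟨by omega, ?_⟩, trivial⟩
    rw [← mul_add, ← hn]
    congr 1
    omega
  · rintro ⟨a, b, x, y⟩ hp
    simp only [Finset.mem_filter, mem_quadruples, Prod.mk.injEq, true_and] at hp ⊢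
    omega
  · rintro ⟨⟨d, m⟩, x⟩ hp
    simp only [Finset.mem_sigma, Finset.mem_Ico] at hp ⊢
    rw [show x + (m - x) = m by omega]
  · rintro ⟨a, b, x, y⟩ hp
    simp only [Finset.mem_filter, mem_quadruples] at hp ⊢
    rw [show x + y - x = y by omega, hp.2]

/-- If the symmetrization of `T` is the difference of the two symmetrizations of `H` attached to
`x < y` and to `a ≠ b`, then the sum of `T` over all quadruples reduces to divisor sums. -/
lemma sum_quadruples_eq_of_telescoping (n : ℕ) (T H : ℕ → ℕ → ℕ → ℕ → ℂ)
    (h : ∀ a b x y, x < y → T a b x y + T b a y x =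
      (H a b x y + H b a y x) - (H (a + b) b x (y - x) + H b (a + b) (y - x) x)) :
    ∑ p ∈ quadruples n, T p.1 p.2.1 p.2.2.1 p.2.2.2 =
      ∑ p ∈ n.divisorsAntidiagonal,
        ((∑ a ∈ Finset.Ico 1 p.1, (T a (p.1 - a) p.2 p.2 - H a (p.1 - a) p.2 p.2)) +
          ∑ x ∈ Finset.Ico 1 p.2, H p.1 p.1 x (p.2 - x)) := by
  have hT := sum_quadruples_split_right n T
  have hr := sum_quadruples_split_right n H
  have hl := sum_quadruples_split_left n H
  rw [sum_quadruples_right_eq] at hT hr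
  rw [sum_quadruples_left_eq] at hl
  rw [Finset.sum_congr rfl fun p hp => h p.1 p.2.1 p.2.2.1 p.2.2.2 (Finset.mem_filter.1 hp).2,
    Finset.sum_sub_distrib] at hT
  simp only [Finset.sum_sub_distrib, Finset.sum_add_distrib] at hT hr hl ⊢
  linear_combination hT - hr + hl

lemma χ₃_eq (a : ℕ) : χ₃ a = 0 ∨ χ₃ a = 1 ∨ χ₃ a = -1 := by
  unfold χ₃
  split_ifs <;> simp

lemma χ₃_add (a b : ℕ) :
    χ₃ (a + b) = χ₃ a + χ₃ b - 3 / 2 * (χ₃ a * χ₃ b * (χ₃ a + χ₃ b)) := by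
  have ha : a % 3 = 0 ∨ a % 3 = 1 ∨ a % 3 = 2 := by omega
  have hb : b % 3 = 0 ∨ b % 3 = 1 ∨ b % 3 = 2 := by omega
  rcases ha with ha | ha | ha <;> rcases hb with hb | hb | hb <;>
    norm_num [χ₃, Nat.add_mod, ha, hb]

lemma χ₃_three_mul_add (k r : ℕ) : χ₃ (3 * k + r) = χ₃ r := by
  simp [χ₃]

lemma χ₃_sub {a s : ℕ} (h : a ≤ s) :
    χ₃ (s - a) = χ₃ s - χ₃ a + 3 / 2 * (χ₃ s * χ₃ a * (χ₃ s - χ₃ a)) := by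
  obtain ⟨b, rfl⟩ := Nat.exists_eq_add_of_le h
  rw [Nat.add_sub_cancel_left, χ₃_add]
  rcases χ₃_eq a with ha | ha | ha <;> rcases χ₃_eq b with hb | hb | hb <;>
    rw [ha, hb] <;> norm_num

/-- The function of `a` and `b` mod `3` which is `0` if `3 ∣ b`, `-2` if `3 ∣ a + b` but `3 ∤ b`,
and `1` otherwise. -/
noncomputable def residueKernel (a b : ℕ) : ℂ :=
  χ₃ b ^ 2 - 3 / 2 * (χ₃ a ^ 2 * χ₃ b ^ 2) + 3 / 2 * (χ₃ a * χ₃ b)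

lemma sum_Ico_one_eq (f : ℕ → ℂ) {s : ℕ} (hs : 0 < s) :
    ∑ a ∈ Finset.Ico 1 s, f a = ∑ a ∈ Finset.range s, f a - f 0 := by
  rw [Finset.range_eq_Ico, Finset.sum_eq_sum_Ico_succ_bot hs]
  ring

lemma sum_range_three_mul (f : ℕ → ℂ) (k : ℕ) :
    ∑ a ∈ Finset.range (3 * k), f a =
      ∑ j ∈ Finset.range k, (f (3 * j) + f (3 * j + 1) + f (3 * j + 2)) := by
  induction k with
  | zero => simp
  | succ k ih =>
    rw [Finset.sum_range_succ, ← ih, show 3 * (k + 1) = 3 * k + 1 + 1 + 1 by ring,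
      Finset.sum_range_succ, Finset.sum_range_succ, Finset.sum_range_succ]
    ring

lemma sum_range_linear (u v : ℂ) (k : ℕ) :
    ∑ j ∈ Finset.range k, (u * (j : ℂ) + v) = u * (k * (k - 1) / 2) + v * k := by
  induction k with
  | zero => simp
  | succ k ih =>
    rw [Finset.sum_range_succ, ih]
    push_cast
    ring

lemma exists_eq_three_mul_add (s : ℕ) : ∃ k, s = 3 * k ∨ s = 3 * k + 1 ∨ s = 3 * k + 2 :=
  ⟨s / 3, by omega⟩

lemma sum_residues_sq_right (m : ℂ) {s : ℕ} (hs : 0 < s) :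
    ∑ a ∈ Finset.Ico 1 s, (χ₃ a * (m ^ 2 * χ₃ (s - a)) -
      (m ^ 2 * residueKernel a (s - a) + 2 * (χ₃ a * χ₃ (s - a) * m * m) +
        m ^ 2 * residueKernel (s - a) a) / 6) = (χ₃ s ^ 2 - χ₃ s) * m ^ 2 / 6 := by
  have h1 : χ₃ 1 = 1 := by simp [χ₃]
  have h2 : χ₃ 2 = -1 := by simp [χ₃]
  have h0 : ∀ j, χ₃ (3 * j) = 0 := by simp [χ₃]
  rw [Finset.sum_congr rfl fun a ha => by
    rw [residueKernel, residueKernel, χ₃_sub (Finset.mem_Ico.1 ha).2.le], sum_Ico_one_eq _ hs]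
  obtain ⟨k, rfl | rfl | rfl⟩ := exists_eq_three_mul_add s
  all_goals
    simp only [Finset.sum_range_succ, sum_range_three_mul, χ₃_three_mul_add, h1, h2, h0]
    rw [Finset.sum_eq_zero fun j _ => by ring]
    simp only [show χ₃ 0 = 0 from h0 0]
    ring

lemma sum_left_sq_right (c : ℕ) {m : ℕ} (hm : 0 < m) :
    ∑ x ∈ Finset.Ico 1 m, (((m - x : ℕ) : ℂ) ^ 2 * residueKernel c c +
      2 * (χ₃ c * χ₃ c * x * ((m - x : ℕ) : ℂ)) + (x : ℂ) ^ 2 * residueKernel c c) / 6 =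
      χ₃ c ^ 2 * ((m : ℂ) ^ 3 - (m : ℂ) ^ 2) / 6 := by
  have h : ∀ x ∈ Finset.Ico 1 m, (((m - x : ℕ) : ℂ) ^ 2 * residueKernel c c +
      2 * (χ₃ c * χ₃ c * x * ((m - x : ℕ) : ℂ)) + (x : ℂ) ^ 2 * residueKernel c c) / 6 =
      χ₃ c ^ 2 * (m : ℂ) ^ 2 / 6 := by
    intro x hx
    rw [Nat.cast_sub (Finset.mem_Ico.1 hx).2.le, residueKernel]
    rcases χ₃_eq c with hc | hc | hc <;> rw [hc] <;> ring
  rw [Finset.sum_congr rfl h, Finset.sum_const, Nat.card_Ico, nsmul_eq_mul,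
    Nat.cast_sub (Nat.one_le_iff_ne_zero.2 hm.ne')]
  push_cast
  ring

/-- The convolution of `χ₋₃(a)` with `y² χ₋₃(b)`. -/
lemma sum_quadruples_sq_right (n : ℕ) :
    ∑ p ∈ quadruples n, χ₃ p.1 * ((p.2.2.2 : ℂ) ^ 2 * χ₃ p.2.1) =
      ∑ p ∈ n.divisorsAntidiagonal,
        (χ₃ p.1 ^ 2 * (p.2 : ℂ) ^ 3 - χ₃ p.1 * (p.2 : ℂ) ^ 2) / 6 := by
  rw [sum_quadruples_eq_of_telescoping n (fun a b _ y => χ₃ a * ((y : ℂ) ^ 2 * χ₃ b))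
    (fun a b x y => ((y : ℂ) ^ 2 * residueKernel a b + 2 * (χ₃ a * χ₃ b * x * y) +
      (x : ℂ) ^ 2 * residueKernel b a) / 6)]
  · refine Finset.sum_congr rfl fun p hp => ?_
    rw [Nat.mem_divisorsAntidiagonal] at hp
    rw [sum_residues_sq_right, sum_left_sq_right]
    · ring
    · exact Nat.pos_of_ne_zero fun h => hp.2 (by rw [← hp.1, h, mul_zero])
    · exact Nat.pos_of_ne_zero fun h => hp.2 (by rw [← hp.1, h, zero_mul])
  · intro a b x y hxy
    simp only [residueKernel, χ₃_add, Nat.cast_sub hxy.le]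
    rcases χ₃_eq a with ha | ha | ha <;> rcases χ₃_eq b with hb | hb | hb <;>
      rw [ha, hb] <;> ring

lemma sum_residues_sq_left {s : ℕ} (hs : 0 < s) :
    ∑ a ∈ Finset.Ico 1 s, (χ₃ a * (((s - a : ℕ) : ℂ) ^ 2 * χ₃ (s - a)) -
      ((a : ℂ) ^ 2 * residueKernel a (s - a) - 2 * (χ₃ a * χ₃ (s - a) * a * ((s - a : ℕ) : ℂ)) +
        ((s - a : ℕ) : ℂ) ^ 2 * residueKernel (s - a) a) / 6) =
      (2 * χ₃ s - 3 * ((s : ℂ) ^ 2 * χ₃ s) - (2 - 3 * χ₃ s ^ 2) * (s : ℂ) ^ 3) / 18 := by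
  have h1 : χ₃ 1 = 1 := by simp [χ₃]
  have h2 : χ₃ 2 = -1 := by simp [χ₃]
  have h0 : ∀ j, χ₃ (3 * j) = 0 := by simp [χ₃]
  rw [Finset.sum_congr rfl fun a ha => by
    rw [residueKernel, residueKernel, χ₃_sub (Finset.mem_Ico.1 ha).2.le,
      Nat.cast_sub (Finset.mem_Ico.1 ha).2.le], sum_Ico_one_eq _ hs]
  obtain ⟨k, rfl | rfl | rfl⟩ := exists_eq_three_mul_add s
  all_goals
    simp only [Finset.sum_range_succ, sum_range_three_mul, χ₃_three_mul_add, h1, h2, h0]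
    simp only [show χ₃ 0 = 0 from h0 0]
    push_cast
  · rw [Finset.sum_congr rfl fun (j : ℕ) _ =>
      show _ = 18 * (k : ℂ) * (j : ℂ) + (9 * (k : ℂ) - 12 * (k : ℂ) ^ 2) by ring,
      sum_range_linear]
    ring
  · rw [Finset.sum_congr rfl fun (j : ℕ) _ =>
      show _ = -9 * (k : ℂ) * (j : ℂ) + (-1 / 2 - 3 * (k : ℂ) + 6 * (k : ℂ) ^ 2) by ring,
      sum_range_linear]
    ring
  · rw [Finset.sum_congr rfl fun (j : ℕ) _ =>
      show _ = (-6 - 9 * (k : ℂ)) * (j : ℂ) + (1 + 6 * (k : ℂ) + 6 * (k : ℂ) ^ 2) by ring,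
      sum_range_linear]
    ring

/-- The convolution of `χ₋₃(a)` with `b² χ₋₃(b)`. -/
lemma sum_quadruples_sq_left (n : ℕ) :
    ∑ p ∈ quadruples n, χ₃ p.1 * ((p.2.1 : ℂ) ^ 2 * χ₃ p.2.1) =
      ∑ p ∈ n.divisorsAntidiagonal,
        (2 * χ₃ p.1 - 3 * ((p.1 : ℂ) ^ 2 * χ₃ p.1) -
          (2 - 3 * χ₃ p.1 ^ 2) * (p.1 : ℂ) ^ 3) / 18 := by
  rw [sum_quadruples_eq_of_telescoping n (fun a b _ _ => χ₃ a * ((b : ℂ) ^ 2 * χ₃ b))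
    (fun a b _ _ => ((a : ℂ) ^ 2 * residueKernel a b - 2 * (χ₃ a * χ₃ b * a * b) +
      (b : ℂ) ^ 2 * residueKernel b a) / 6)]
  · refine Finset.sum_congr rfl fun p hp => ?_
    rw [Nat.mem_divisorsAntidiagonal] at hp
    rw [sum_residues_sq_left, Finset.sum_eq_zero, add_zero]
    · intro x _
      simp only [residueKernel]
      rcases χ₃_eq p.1 with h | h | h <;> rw [h] <;> ring
    · exact Nat.pos_of_ne_zero fun h => hp.2 (by rw [← hp.1, h, zero_mul])
  · intro a b x y hxy
    simp only [residueKernel, χ₃_add, Nat.cast_add]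
    rcases χ₃_eq a with ha | ha | ha <;> rcases χ₃_eq b with hb | hb | hb <;>
      rw [ha, hb] <;> ring

/-- The divisor sum `Σ_{d m = n} φ(d, m)`. -/
noncomputable def divisorSum (φ : ℕ → ℕ → ℂ) (n : ℕ) : ℂ :=
  ∑ p ∈ n.divisorsAntidiagonal, φ p.1 p.2

lemma divisorSum_zero (φ : ℕ → ℕ → ℂ) : divisorSum φ 0 = 0 := by simp [divisorSum]

lemma sum_antidiagonal_divisorSum_mul (φ ψ : ℕ → ℕ → ℂ) (n : ℕ) :
    ∑ ij ∈ Finset.HasAntidiagonal.antidiagonal n, divisorSum φ ij.1 * divisorSum ψ ij.2 =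
      ∑ p ∈ quadruples n, φ p.1 p.2.2.1 * ψ p.2.1 p.2.2.2 := by
  simp only [divisorSum, Finset.sum_mul_sum, ← Finset.sum_product']
  rw [Finset.sum_sigma']
  refine Finset.sum_nbij' (fun s => (s.2.1.1, s.2.2.1, s.2.1.2, s.2.2.2))
    (fun p => ⟨(p.1 * p.2.2.1, p.2.1 * p.2.2.2), ((p.1, p.2.2.1), (p.2.1, p.2.2.2))⟩) ?_ ?_ ?_ ?_ ?_
  · rintro ⟨⟨i, j⟩, ⟨a, x⟩, ⟨b, y⟩⟩ h
    simp only [Finset.mem_sigma, Finset.HasAntidiagonal.mem_antidiagonal, Finset.mem_product,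
      Nat.mem_divisorsAntidiagonal, mem_quadruples] at h ⊢
    obtain ⟨hn, ⟨rfl, hi⟩, ⟨rfl, hj⟩⟩ := h
    simp only [ne_eq, mul_eq_zero, not_or] at hi hj
    exact ⟨by omega, hn⟩
  · rintro ⟨a, b, x, y⟩ h
    simp only [Finset.mem_sigma, Finset.HasAntidiagonal.mem_antidiagonal, Finset.mem_product,
      Nat.mem_divisorsAntidiagonal, mem_quadruples] at h ⊢
    obtain ⟨⟨ha, hb, hx, hy⟩, hn⟩ := h
    exact ⟨hn, ⟨trivial, (Nat.mul_pos ha hx).ne'⟩, ⟨trivial, (Nat.mul_pos hb hy).ne'⟩⟩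
  · rintro ⟨⟨i, j⟩, ⟨a, x⟩, ⟨b, y⟩⟩ h
    simp only [Finset.mem_sigma, Finset.HasAntidiagonal.mem_antidiagonal, Finset.mem_product,
      Nat.mem_divisorsAntidiagonal] at h
    obtain ⟨hn, ⟨rfl, hi⟩, ⟨rfl, hj⟩⟩ := h
    rfl
  · rintro ⟨a, b, x, y⟩ _
    rfl
  · rintro ⟨⟨i, j⟩, ⟨a, x⟩, ⟨b, y⟩⟩ _
    rfl

lemma one_sub_χ₃_sq (d : ℕ) : 1 - χ₃ d ^ 2 = if 3 ∣ d then 1 else 0 := by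
  have hd : d % 3 = 0 ∨ d % 3 = 1 ∨ d % 3 = 2 := by omega
  rcases hd with h | h | h <;> simp [χ₃, Nat.dvd_iff_mod_eq_zero, h]

lemma divisorSum_cube_left (n : ℕ) :
    divisorSum (fun d _ => (1 - χ₃ d ^ 2) * (d : ℂ) ^ 3) n =
      27 * divisorSum (fun d m => (1 - χ₃ d ^ 2) * (m : ℂ) ^ 3) n := by
  simp only [divisorSum, one_sub_χ₃_sq, ite_mul, one_mul, zero_mul, ← Finset.sum_filter,
    Finset.mul_sum]
  have hmem : ∀ p ∈ n.divisorsAntidiagonal.filter (fun p => 3 ∣ p.1),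
      (3 * p.2, p.1 / 3) ∈ n.divisorsAntidiagonal.filter (fun p => 3 ∣ p.1) := by
    rintro ⟨d, m⟩ h
    simp only [Finset.mem_filter, Nat.mem_divisorsAntidiagonal] at h ⊢
    obtain ⟨⟨h, h0⟩, c, rfl⟩ := h
    refine ⟨⟨?_, h0⟩, dvd_mul_right _ _⟩
    rw [Nat.mul_div_cancel_left _ (by norm_num), ← h]
    ring
  have hinv : ∀ p ∈ n.divisorsAntidiagonal.filter (fun p => 3 ∣ p.1),
      (3 * (p.1 / 3), 3 * p.2 / 3) = p := by
    rintro ⟨d, m⟩ h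
    simp only [Finset.mem_filter] at h
    rw [Nat.mul_div_cancel' h.2, Nat.mul_div_cancel_left _ (by norm_num)]
  refine Finset.sum_nbij' (fun p => (3 * p.2, p.1 / 3)) (fun p => (3 * p.2, p.1 / 3))
    hmem hmem hinv hinv ?_
  rintro ⟨d, m⟩ h
  simp only [Finset.mem_filter] at h
  obtain ⟨-, c, rfl⟩ := h
  rw [Nat.mul_div_cancel_left _ (by norm_num)]
  push_cast
  ring

lemma divisorSum_three_mul {n : ℕ} (hn : n ≠ 0) :
    divisorSum (fun d m => (1 - χ₃ d ^ 2) * (m : ℂ) ^ 3) (3 * n) = sigmaC 3 n := by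
  rw [sigmaC, ← Nat.sum_divisorsAntidiagonal' (fun _ m => (m : ℂ) ^ 3)]
  simp only [divisorSum, one_sub_χ₃_sq, ite_mul, one_mul, zero_mul, ← Finset.sum_filter]
  refine Finset.sum_nbij' (fun p => (p.1 / 3, p.2)) (fun p => (3 * p.1, p.2)) ?_ ?_ ?_ ?_ ?_
  · rintro ⟨d, m⟩ h
    simp only [Finset.mem_filter, Nat.mem_divisorsAntidiagonal] at h ⊢
    obtain ⟨⟨h, -⟩, c, rfl⟩ := h
    rw [mul_assoc] at h
    rw [Nat.mul_div_cancel_left _ (by norm_num)]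
    exact ⟨Nat.eq_of_mul_eq_mul_left (by norm_num) h, hn⟩
  · rintro ⟨d, m⟩ h
    simp only [Finset.mem_filter, Nat.mem_divisorsAntidiagonal] at h ⊢
    exact ⟨⟨by rw [mul_assoc, h.1], by omega⟩, dvd_mul_right _ _⟩
  · rintro ⟨d, m⟩ h
    simp only [Finset.mem_filter] at h
    rw [Nat.mul_div_cancel' h.2]
  · rintro ⟨d, m⟩ _
    rw [Nat.mul_div_cancel_left _ (by norm_num)]
  · rintro ⟨d, m⟩ _
    rfl

lemma divisorSum_eq_zero_of_not_dvd {n : ℕ} (hn : ¬ 3 ∣ n) :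
    divisorSum (fun d m => (1 - χ₃ d ^ 2) * (m : ℂ) ^ 3) n = 0 := by
  refine Finset.sum_eq_zero fun p hp => ?_
  rw [Nat.mem_divisorsAntidiagonal] at hp
  simp only [one_sub_χ₃_sq]
  rw [if_neg fun h => hn (hp.1 ▸ h.mul_right _), zero_mul]

/-- The coefficientwise form of the identity. -/
lemma divisorSum_identity (n : ℕ) :
    6 * divisorSum (fun d _ => χ₃ d) n
      - 9 * divisorSum (fun d _ => (d : ℂ) ^ 2 * χ₃ d) n
      - 27 * divisorSum (fun d m => (m : ℂ) ^ 2 * χ₃ d) n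
      - 54 * ∑ ij ∈ Finset.HasAntidiagonal.antidiagonal n, divisorSum (fun d _ => χ₃ d) ij.1 *
          divisorSum (fun d _ => (d : ℂ) ^ 2 * χ₃ d) ij.2
      - 162 * ∑ ij ∈ Finset.HasAntidiagonal.antidiagonal n, divisorSum (fun d _ => χ₃ d) ij.1 *
          divisorSum (fun d m => (m : ℂ) ^ 2 * χ₃ d) ij.2 =
    270 * divisorSum (fun d m => (1 - χ₃ d ^ 2) * (m : ℂ) ^ 3) n
      - 30 * divisorSum (fun _ m => (m : ℂ) ^ 3) n := by
  have hcube := divisorSum_cube_left n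
  have hsymm : divisorSum (fun d _ => (d : ℂ) ^ 3) n = divisorSum (fun _ m => (m : ℂ) ^ 3) n := by
    rw [divisorSum, divisorSum, Nat.sum_divisorsAntidiagonal (fun d _ => (d : ℂ) ^ 3),
      Nat.sum_divisorsAntidiagonal' (fun _ d => (d : ℂ) ^ 3)]
  rw [sum_antidiagonal_divisorSum_mul, sum_antidiagonal_divisorSum_mul, sum_quadruples_sq_left,
    sum_quadruples_sq_right]
  have key : 6 * divisorSum (fun d _ => χ₃ d) n
      - 9 * divisorSum (fun d _ => (d : ℂ) ^ 2 * χ₃ d) n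
      - 27 * divisorSum (fun d m => (m : ℂ) ^ 2 * χ₃ d) n
      - 54 * ∑ p ∈ n.divisorsAntidiagonal, (2 * χ₃ p.1 - 3 * ((p.1 : ℂ) ^ 2 * χ₃ p.1) -
          (2 - 3 * χ₃ p.1 ^ 2) * (p.1 : ℂ) ^ 3) / 18
      - 162 * ∑ p ∈ n.divisorsAntidiagonal,
          (χ₃ p.1 ^ 2 * (p.2 : ℂ) ^ 3 - χ₃ p.1 * (p.2 : ℂ) ^ 2) / 6 =
      9 * divisorSum (fun d _ => (1 - χ₃ d ^ 2) * (d : ℂ) ^ 3) n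
      - 3 * divisorSum (fun d _ => (d : ℂ) ^ 3) n
      + 27 * divisorSum (fun d m => (1 - χ₃ d ^ 2) * (m : ℂ) ^ 3) n
      - 27 * divisorSum (fun _ m => (m : ℂ) ^ 3) n := by
    simp only [divisorSum, Finset.mul_sum, ← Finset.sum_sub_distrib, ← Finset.sum_add_distrib]
    refine Finset.sum_congr rfl fun p _ => ?_
    ring
  linear_combination key + 9 * hcube - 3 * hsymm

lemma norm_χ₃_le (d : ℕ) : ‖χ₃ d‖ ≤ 1 := by
  rcases χ₃_eq d with h | h | h <;> simp [h]

lemma norm_divisorSum_le {φ : ℕ → ℕ → ℂ}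
    (hφ : ∀ d m, 0 < d → 0 < m → ‖φ d m‖ ≤ ((d * m : ℕ) : ℝ) ^ 3) (n : ℕ) :
    ‖divisorSum φ n‖ ≤ (n : ℝ) ^ 4 := by
  have hcard : (n.divisorsAntidiagonal.card : ℝ) ≤ n := by
    rw [← Nat.map_div_right_divisors, Finset.card_map]
    exact_mod_cast Nat.card_divisors_le_self n
  calc ‖divisorSum φ n‖ ≤ ∑ p ∈ n.divisorsAntidiagonal, (n : ℝ) ^ 3 := by
        refine norm_sum_le_of_le _ fun p hp => ?_
        rw [Nat.mem_divisorsAntidiagonal] at hp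
        have := hφ p.1 p.2
          (Nat.pos_of_ne_zero fun h => hp.2 (by rw [← hp.1, h, zero_mul]))
          (Nat.pos_of_ne_zero fun h => hp.2 (by rw [← hp.1, h, mul_zero]))
        rwa [hp.1] at this
    _ = n.divisorsAntidiagonal.card * (n : ℝ) ^ 3 := by rw [Finset.sum_const, nsmul_eq_mul]
    _ ≤ n * (n : ℝ) ^ 3 := by gcongr
    _ = (n : ℝ) ^ 4 := by ring

lemma summable_norm_divisorSum_mul_pow {φ : ℕ → ℕ → ℂ}
    (hφ : ∀ d m, 0 < d → 0 < m → ‖φ d m‖ ≤ ((d * m : ℕ) : ℝ) ^ 3) {q : ℂ} (hq : ‖q‖ < 1) :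
    Summable fun n => ‖divisorSum φ n * q ^ n‖ := by
  refine Summable.of_nonneg_of_le (fun _ => norm_nonneg _) (fun n => ?_)
    (summable_norm_pow_mul_geometric_of_norm_lt_one 4 hq)
  rw [norm_mul, norm_mul, norm_pow (n : ℂ), Complex.norm_natCast]
  gcongr
  exact norm_divisorSum_le hφ n

lemma tsum_succ_eq_tsum {f : ℕ → ℂ} (hf : f 0 = 0) : ∑' n, f (n + 1) = ∑' n, f n := by
  refine (add_left_injective 1).tsum_eq fun n hn => ?_
  cases n with
  | zero => exact absurd hf hn
  | succ n => exact ⟨n, rfl⟩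

lemma tsum_divisorSum_succ (φ : ℕ → ℕ → ℂ) (q : ℂ) :
    ∑' n : ℕ, divisorSum φ (n + 1) * q ^ (n + 1) = ∑' n : ℕ, divisorSum φ n * q ^ n :=
  tsum_succ_eq_tsum (f := fun n => divisorSum φ n * q ^ n) (by simp [divisorSum_zero])

lemma norm_qq_lt_one {τ : ℂ} (hτ : 0 < τ.im) : ‖qq τ‖ < 1 := by
  rw [qq, Complex.norm_exp, Real.exp_lt_one_iff]
  simp
  positivity

lemma qq_three_mul (τ : ℂ) : qq (3 * τ) = qq τ ^ 3 := by
  rw [qq, qq, ← Complex.exp_nat_mul]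
  congr 1
  push_cast
  ring

lemma E₄_eq (τ : ℂ) :
    E₄ τ = 1 + 240 * ∑' n : ℕ, divisorSum (fun _ m => (m : ℂ) ^ 3) n * qq τ ^ n := by
  rw [← tsum_divisorSum_succ, E₄]
  simp only [sigmaC, divisorSum, Nat.sum_divisorsAntidiagonal' (fun _ m => (m : ℂ) ^ 3)]

lemma E₄_three_mul_eq (τ : ℂ) :
    E₄ (3 * τ) = 1 + 240 *
      ∑' n : ℕ, divisorSum (fun d m => (1 - χ₃ d ^ 2) * (m : ℂ) ^ 3) n * qq τ ^ n := by
  have hinj : Function.Injective fun n : ℕ => 3 * (n + 1) := fun m n h => by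
    simpa using h
  rw [E₄, qq_three_mul, ← hinj.tsum_eq (f := fun n =>
    divisorSum (fun d m => (1 - χ₃ d ^ 2) * (m : ℂ) ^ 3) n * qq τ ^ n)]
  · simp only [divisorSum_three_mul (Nat.succ_ne_zero _), pow_mul]
  · intro n hn
    by_cases h : 3 ∣ n
    · obtain ⟨c, rfl⟩ := h
      cases c with
      | zero => exact absurd (by simp [divisorSum_zero]) hn
      | succ c => exact ⟨c, rfl⟩
    · exact absurd (by simp [divisorSum_eq_zero_of_not_dvd h]) hn

lemma E₁₃_eq (τ : ℂ) :
    E₁₃ τ = 1 / 6 + ∑' n : ℕ, divisorSum (fun d _ => χ₃ d) n * qq τ ^ n := by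
  rw [← tsum_divisorSum_succ, E₁₃]
  simp only [divisorSum, Nat.sum_divisorsAntidiagonal (fun d _ => χ₃ d)]

lemma E₃₃₁_eq (τ : ℂ) :
    E₃₃₁ τ = -(1 / 9) +
      ∑' n : ℕ, divisorSum (fun d _ => (d : ℂ) ^ 2 * χ₃ d) n * qq τ ^ n := by
  rw [← tsum_divisorSum_succ, E₃₃₁]
  simp only [divisorSum, Nat.sum_divisorsAntidiagonal (fun d _ => (d : ℂ) ^ 2 * χ₃ d)]

lemma E₃₁₃_eq (τ : ℂ) :
    E₃₁₃ τ = ∑' n : ℕ, divisorSum (fun d m => (m : ℂ) ^ 2 * χ₃ d) n * qq τ ^ n := by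
  rw [← tsum_divisorSum_succ, E₃₁₃]
  simp only [divisorSum, Nat.sum_divisorsAntidiagonal' (fun d m => (m : ℂ) ^ 2 * χ₃ d)]

lemma hasSum_antidiagonal_mul_pow {f g : ℕ → ℂ} {q : ℂ} (hf : Summable fun n => ‖f n * q ^ n‖)
    (hg : Summable fun n => ‖g n * q ^ n‖) :
    HasSum (fun n => (∑ ij ∈ Finset.HasAntidiagonal.antidiagonal n, f ij.1 * g ij.2) * q ^ n)
      ((∑' n, f n * q ^ n) * ∑' n, g n * q ^ n) := by
  have hs := (summable_norm_sum_mul_antidiagonal_of_summable_norm hf hg).of_norm.hasSum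
  rw [← tsum_mul_tsum_eq_tsum_sum_antidiagonal_of_summable_norm hf hg] at hs
  refine (congrArg (HasSum · _) (funext fun n => ?_)).mpr hs
  rw [Finset.sum_mul]
  refine Finset.sum_congr rfl fun ij hij => ?_
  rw [← Finset.HasAntidiagonal.mem_antidiagonal.1 hij, pow_add]
  ring

theorem stmt13 (τ : ℂ) (hτ : 0 < τ.im) :
    E₃₄ τ = -54 * E₁₃ τ * (E₃₃₁ τ + 3 * E₃₁₃ τ) := by
  have hq := norm_qq_lt_one hτ
  have hχ : ∀ d : ℕ, ‖1 - χ₃ d ^ 2‖ ≤ 1 := fun d => by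
    rw [one_sub_χ₃_sq]
    split_ifs <;> simp
  have hpow : ∀ (k d m : ℕ) (z : ℂ), k ≤ 3 → 0 < d → 0 < m → ‖z‖ ≤ 1 →
      ‖(d : ℂ) ^ k * z‖ ≤ ((d * m : ℕ) : ℝ) ^ 3 := fun k d m z hk hd hm hz => by
    have hd' : (1 : ℝ) ≤ d := by exact_mod_cast hd
    have hle : (d : ℝ) ≤ ((d * m : ℕ) : ℝ) := by
      exact_mod_cast Nat.le_mul_of_pos_right d hm
    calc ‖(d : ℂ) ^ k * z‖ = (d : ℝ) ^ k * ‖z‖ := by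
          rw [norm_mul, norm_pow, Complex.norm_natCast]
      _ ≤ (d : ℝ) ^ k * 1 := by gcongr
      _ ≤ (d : ℝ) ^ 3 := by rw [mul_one]; exact pow_le_pow_right₀ hd' hk
      _ ≤ ((d * m : ℕ) : ℝ) ^ 3 := by gcongr
  have hA := summable_norm_divisorSum_mul_pow (φ := fun d _ => χ₃ d) (fun d m hd hm => by
    simpa using hpow 0 d m _ (by norm_num) hd hm (norm_χ₃_le d)) hq
  have hB := summable_norm_divisorSum_mul_pow (φ := fun d _ => (d : ℂ) ^ 2 * χ₃ d)
    (fun d m hd hm => hpow 2 d m _ (by norm_num) hd hm (norm_χ₃_le d)) hq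
  have hC := summable_norm_divisorSum_mul_pow (φ := fun d m => (m : ℂ) ^ 2 * χ₃ d)
    (fun d m hd hm => mul_comm m d ▸ hpow 2 m d _ (by norm_num) hm hd (norm_χ₃_le d)) hq
  have hS := summable_norm_divisorSum_mul_pow (φ := fun _ m => (m : ℂ) ^ 3)
    (fun d m hd hm => by simpa [mul_comm] using hpow 3 m d 1 le_rfl hm hd (by simp)) hq
  have hS' := summable_norm_divisorSum_mul_pow (φ := fun d m => (1 - χ₃ d ^ 2) * (m : ℂ) ^ 3)
    (fun d m hd hm => by
      simpa only [mul_comm] using hpow 3 m d _ le_rfl hm hd (hχ d)) hq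
  have hlhs := (((hA.of_norm.hasSum.mul_left 6).sub (hB.of_norm.hasSum.mul_left 9)).sub
    (hC.of_norm.hasSum.mul_left 27)).sub ((hasSum_antidiagonal_mul_pow hA hB).mul_left 54) |>.sub
    ((hasSum_antidiagonal_mul_pow hA hC).mul_left 162)
  have hrhs := (hS'.of_norm.hasSum.mul_left 270).sub (hS.of_norm.hasSum.mul_left 30)
  have h := hlhs.unique (by
    convert hrhs using 2 with n
    linear_combination qq τ ^ n * divisorSum_identity n)
  rw [E₃₄, E₄_three_mul_eq, E₄_eq, E₁₃_eq, E₃₃₁_eq, E₃₁₃_eq]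
  linear_combination -h
end

section
/- For every τ in the complex upper half plane, f_{3,0}(τ)·f_{3,1}(τ) = E_{3,2}(τ); moreover f_{3,j}(((−1)ʲ·3 + i√3)/6) = 0 for j ∈ {0,1}. -/
open Complex

/-- The Lambert term `qⁿ / (1 - qⁿ)`, which vanishes at `n = 0` by convention. -/
noncomputable def lambert (q : ℂ) (n : ℕ) : ℂ := q ^ n / (1 - q ^ n)

lemma lambert_zero (q : ℂ) : lambert q 0 = 0 := by simp [lambert]

lemma lambert_pow (q : ℂ) (k n : ℕ) : lambert (q ^ k) n = lambert q (k * n) := by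
  simp [lambert, pow_mul]

lemma one_sub_pow_ne_zero {q : ℂ} (hq : ‖q‖ < 1) {n : ℕ} (hn : n ≠ 0) : 1 - q ^ n ≠ 0 := by
  intro h
  have h1 : ‖q ^ n‖ < 1 := by
    rw [norm_pow]
    exact pow_lt_one₀ (norm_nonneg _) hq hn
  rw [← sub_eq_zero.mp h, norm_one] at h1
  exact lt_irrefl _ h1

lemma norm_lambert_le {q : ℂ} (hq : ‖q‖ < 1) (n : ℕ) :
    ‖lambert q n‖ ≤ (1 - ‖q‖)⁻¹ * ‖q‖ ^ n := by
  have h1 : 0 < 1 - ‖q‖ := sub_pos.mpr hq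
  rcases eq_or_ne n 0 with rfl | hn
  · rw [lambert_zero, norm_zero]
    positivity
  · have h2 : 1 - ‖q‖ ≤ ‖1 - q ^ n‖ := by
      have h3 : ‖q‖ ^ n ≤ ‖q‖ := pow_le_of_le_one (norm_nonneg _) hq.le hn
      have h4 := norm_sub_norm_le (1 : ℂ) (q ^ n)
      rw [norm_one, norm_pow] at h4
      linarith
    rw [lambert, norm_div, norm_pow, div_eq_inv_mul]
    gcongr

lemma summable_of_norm_le_mul_geometric {f : ℕ → ℂ} {r C : ℝ} (k : ℕ) (h0 : 0 ≤ r) (h1 : r < 1)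
    (h : ∀ n, ‖f n‖ ≤ C * ((n : ℝ) ^ k * r ^ n)) : Summable f :=
  Summable.of_norm_bounded
    ((summable_pow_mul_geometric_of_norm_lt_one k (by rwa [Real.norm_of_nonneg h0])).mul_left C) h

lemma summable_mul_lambert {q : ℂ} (hq : ‖q‖ < 1) {g : ℕ → ℂ} {C : ℝ} (k : ℕ)
    (hg : ∀ n, ‖g n‖ ≤ C * (n : ℝ) ^ k) : Summable fun n ↦ g n * lambert q n := by
  refine summable_of_norm_le_mul_geometric (C := C * (1 - ‖q‖)⁻¹) k (norm_nonneg q) hq fun n ↦ ?_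
  rw [norm_mul]
  calc _ ≤ (C * (n : ℝ) ^ k) * ((1 - ‖q‖)⁻¹ * ‖q‖ ^ n) :=
        mul_le_mul (hg n) (norm_lambert_le hq n) (norm_nonneg _) ((norm_nonneg _).trans (hg n))
    _ = _ := by ring

lemma summable_lambert {q : ℂ} (hq : ‖q‖ < 1) : Summable (lambert q) := by
  simpa using summable_mul_lambert hq (g := fun _ ↦ 1) (C := 1) 0 (by simp)

lemma summable_natCast_mul_lambert {q : ℂ} (hq : ‖q‖ < 1) :
    Summable fun n : ℕ ↦ (n : ℂ) * lambert q n :=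
  summable_mul_lambert hq (C := 1) 1 (by simp)

lemma summable_lambert_sq {q : ℂ} (hq : ‖q‖ < 1) : Summable fun n ↦ lambert q n ^ 2 := by
  simp_rw [sq]
  refine summable_mul_lambert hq (g := lambert q) (C := (1 - ‖q‖)⁻¹) 0 fun n ↦ ?_
  refine (norm_lambert_le hq n).trans ?_
  have h1 : 0 < 1 - ‖q‖ := sub_pos.mpr hq
  rw [pow_zero]
  gcongr
  exact pow_le_one₀ (norm_nonneg _) hq.le

lemma summable_pnat_mul_pow_mul {q : ℂ} (hq : ‖q‖ < 1) {g : ℕ → ℂ} (hg : ∀ n, ‖g n‖ ≤ n) :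
    Summable fun p : ℕ+ × ℕ+ ↦ g p.1 * q ^ (p.1 * p.2 : ℕ) := by
  refine Summable.of_norm_bounded (g := fun p : ℕ+ × ℕ+ ↦ ‖(p.1 : ℂ) ^ 1 * q ^ (p.2 * p.1 : ℕ)‖)
    (summable_prod_mul_pow 1 hq).prod_symm.norm fun p ↦ ?_
  rw [norm_mul, norm_mul, mul_comm (p.2 : ℕ)]
  gcongr
  simpa using hg p.1

lemma tsum_pnat_pow_mul {q : ℂ} (hq : ‖q‖ < 1) (n : ℕ+) :
    ∑' m : ℕ+, q ^ (n * m : ℕ) = lambert q n := by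
  have h : ‖q ^ (n : ℕ)‖ < 1 := by
    rw [norm_pow]
    exact pow_lt_one₀ (norm_nonneg _) hq n.ne_zero
  rw [tsum_pnat_eq_tsum_succ (f := fun m ↦ q ^ ((n : ℕ) * m))]
  simp_rw [pow_mul, pow_succ' (q ^ (n : ℕ)), tsum_mul_left, tsum_geometric_of_norm_lt_one h]
  rfl

/-- Lambert series expansion of a divisor sum generating function. -/
lemma tsum_divisors_mul_pow_eq_tsum_lambert {q : ℂ} (hq : ‖q‖ < 1) {g : ℕ → ℂ}
    (hg : ∀ n, ‖g n‖ ≤ n) :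
    ∑' n : ℕ, (∑ d ∈ (n + 1).divisors, g d) * q ^ (n + 1) = ∑' n : ℕ, g n * lambert q n := by
  have hs := summable_pnat_mul_pow_mul hq hg
  have h0 : ∑' n : ℕ, g n * lambert q n = ∑' n : ℕ+, g n * lambert q n := by
    rw [tsum_pnat_eq_tsum_succ (f := fun n ↦ g n * lambert q n),
      (summable_mul_lambert hq (C := 1) 1 (by simpa using hg)).tsum_eq_zero_add, lambert_zero]
    simp
  rw [h0, ← tsum_pnat_eq_tsum_succ (f := fun n ↦ (∑ d ∈ n.divisors, g d) * q ^ n)]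
  simp_rw [← tsum_pnat_pow_mul hq, ← tsum_mul_left]
  rw [← hs.tsum_prod, ← sigmaAntidiagonalEquivProd.tsum_eq]
  refine Eq.trans ?_ (sigmaAntidiagonalEquivProd.summable_iff.mpr hs).tsum_sigma.symm
  refine tsum_congr fun n ↦ ?_
  rw [tsum_fintype, Finset.sum_mul]
  simp only [Function.comp_apply, sigmaAntidiagonalEquivProd, divisorsAntidiagonalFactors,
    Equiv.coe_fn_mk, PNat.mk_coe]
  rw [Finset.univ_eq_attach,
    (n : ℕ).divisorsAntidiagonal.sum_attach fun x : ℕ × ℕ ↦ g x.1 * q ^ (x.1 * x.2),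
    Nat.sum_divisorsAntidiagonal fun x y ↦ g x * q ^ (x * y)]
  exact Finset.sum_congr rfl fun i hi ↦ by rw [Nat.mul_div_cancel' (Nat.dvd_of_mem_divisors hi)]

/-- `Σ n qⁿ / (1 - qⁿ) = Σ qⁿ / (1 - qⁿ)²`. -/
lemma tsum_natCast_mul_lambert_eq {q : ℂ} (hq : ‖q‖ < 1) :
    ∑' n : ℕ, (n : ℂ) * lambert q n = ∑' n : ℕ, (lambert q n + lambert q n ^ 2) := by
  have hs := summable_pnat_mul_pow_mul hq (g := fun n ↦ (n : ℂ)) (by simp)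
  have h0 {f : ℕ → ℂ} (hf : Summable f) (h : f 0 = 0) : ∑' n : ℕ, f n = ∑' n : ℕ+, f n := by
    rw [tsum_pnat_eq_tsum_succ (f := f), hf.tsum_eq_zero_add, h, zero_add]
  have h1 (m : ℕ+) : ∑' n : ℕ+, (n : ℂ) * q ^ (n * m : ℕ) = lambert q m + lambert q m ^ 2 := by
    have h : ‖q ^ (m : ℕ)‖ < 1 := by
      rw [norm_pow]
      exact pow_lt_one₀ (norm_nonneg _) hq m.ne_zero
    have h2 : Summable fun n : ℕ ↦ (n : ℂ) * (q ^ (m : ℕ)) ^ n := by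
      simpa using summable_pow_mul_geometric_of_norm_lt_one 1 h
    have h3 := one_sub_pow_ne_zero hq m.ne_zero
    simp_rw [mul_comm _ (m : ℕ), pow_mul]
    rw [← h0 h2 (by simp), tsum_coe_mul_geometric_of_norm_lt_one h, lambert]
    field_simp
    ring
  rw [h0 (summable_natCast_mul_lambert hq) (by simp),
    h0 ((summable_lambert hq).add (summable_lambert_sq hq)) (by simp [lambert_zero])]
  simp_rw [← h1, ← tsum_pnat_pow_mul hq, ← tsum_mul_left]
  exact (Summable.tsum_comm (f := fun n m : ℕ+ ↦ (n : ℂ) * q ^ (n * m : ℕ)) hs).symm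

lemma hasSum_sum_antidiagonal {f : ℕ × ℕ → ℂ} (hf : Summable f) :
    HasSum (fun n ↦ ∑ p ∈ Finset.HasAntidiagonal.antidiagonal n, f p) (∑' p, f p) := by
  have h := Finset.HasAntidiagonal.sigmaAntidiagonalEquivProd.hasSum_iff.mpr hf.hasSum
  refine h.sigma fun n ↦ ?_
  have h1 := hasSum_fintype fun p : Finset.HasAntidiagonal.antidiagonal n ↦ f p
  rwa [Finset.univ_eq_attach, Finset.sum_attach _ f] at h1

lemma tsum_prod_eq_tsum_diag_add {f : ℕ × ℕ → ℂ} (hf : Summable f)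
    (hsymm : ∀ a b, f (a, b) = f (b, a)) :
    ∑' p, f p = ∑' a : ℕ, f (a, a) + 2 * ∑' p : ℕ × ℕ, f (p.1, p.1 + p.2 + 1) := by
  have hdiag : ∑' p, {p : ℕ × ℕ | p.1 = p.2}.indicator f p = ∑' a : ℕ, f (a, a) := by
    have hi : Function.Injective fun a : ℕ ↦ (a, a) := fun a b h ↦ (Prod.ext_iff.mp h).1
    rw [← hi.tsum_eq]
    · exact tsum_congr fun a ↦ by simp
    · rintro ⟨a, b⟩ h
      have := Set.mem_of_indicator_ne_zero h
      exact ⟨a, by simpa using this⟩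
  have hlt : ∑' p, {p : ℕ × ℕ | p.1 < p.2}.indicator f p =
      ∑' p : ℕ × ℕ, f (p.1, p.1 + p.2 + 1) := by
    have hi : Function.Injective fun p : ℕ × ℕ ↦ (p.1, p.1 + p.2 + 1) := by
      rintro ⟨a, b⟩ ⟨c, d⟩ h
      simp only [Prod.mk.injEq] at h ⊢
      lia
    rw [← hi.tsum_eq]
    · refine tsum_congr fun p ↦ Set.indicator_of_mem ?_ f
      simp only [Set.mem_ofPred_eq]
      lia
    · rintro ⟨a, b⟩ h
      have h1 : (a, b) ∈ {p : ℕ × ℕ | p.1 < p.2} := Set.mem_of_indicator_ne_zero h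
      simp only [Set.mem_ofPred_eq] at h1
      refine ⟨(a, b - a - 1), ?_⟩
      simp only [Prod.mk.injEq, true_and]
      lia
  have hgt : ∑' p, {p : ℕ × ℕ | p.2 < p.1}.indicator f p =
      ∑' p, {p : ℕ × ℕ | p.1 < p.2}.indicator f p := by
    rw [← (Equiv.prodComm ℕ ℕ).tsum_eq]
    apply tsum_congr
    rintro ⟨a, b⟩
    simp [Set.indicator_apply, hsymm b a]
  have hsplit (p : ℕ × ℕ) : f p = {p : ℕ × ℕ | p.1 = p.2}.indicator f p +
      ({p : ℕ × ℕ | p.1 < p.2}.indicator f p + {p : ℕ × ℕ | p.2 < p.1}.indicator f p) := by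
    rcases lt_trichotomy p.1 p.2 with h | h | h
    · simp [h, h.ne, h.not_gt]
    · simp [h]
    · simp [h, h.ne', h.not_gt]
  rw [tsum_congr hsplit, (hf.indicator _).tsum_add ((hf.indicator _).add (hf.indicator _)),
    (hf.indicator _).tsum_add (hf.indicator _), hdiag, hgt, hlt]
  ring

/-- The even function on residues mod `3` with `3 χ₋₃(a) χ₋₃(b) = c(a - b) - c(a + b)`. -/
def traceCoeff (n : ℕ) : ℂ := if n % 3 = 0 then 2 else -1

lemma three_mul_χ₃_mul_χ₃ (a b : ℕ) :
    3 * (χ₃ a * χ₃ b) = traceCoeff (a + 2 * b) - traceCoeff (a + b) := by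
  have h1 : (a + 2 * b) % 3 = (a % 3 + 2 * (b % 3)) % 3 := by lia
  have h2 : (a + b) % 3 = (a % 3 + b % 3) % 3 := by lia
  simp only [χ₃, traceCoeff, h1, h2]
  have ha : a % 3 < 3 := Nat.mod_lt _ (by norm_num)
  have hb : b % 3 < 3 := Nat.mod_lt _ (by norm_num)
  interval_cases a % 3 <;> interval_cases b % 3 <;> norm_num

lemma norm_traceCoeff_le (n : ℕ) : ‖traceCoeff n‖ ≤ 2 := by
  unfold traceCoeff
  split_ifs <;> norm_num

lemma norm_χ₃_le_one (n : ℕ) : ‖χ₃ n‖ ≤ 1 := by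
  unfold χ₃
  split_ifs <;> norm_num

lemma traceCoeff_congr {m n : ℕ} (h : m % 3 = 0 ↔ n % 3 = 0) : traceCoeff m = traceCoeff n := by
  simp only [traceCoeff, h]

lemma summable_prod_of_norm_le {f : ℕ × ℕ → ℂ} {r C : ℝ} (h0 : 0 ≤ r) (h1 : r < 1)
    (h : ∀ p, ‖f p‖ ≤ C * (r ^ p.1 * r ^ p.2)) : Summable f :=
  Summable.of_norm_bounded (((summable_geometric_of_lt_one h0 h1).mul_of_nonneg
    (summable_geometric_of_lt_one h0 h1) (fun _ ↦ by positivity)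
      fun _ ↦ by positivity).mul_left C) h

lemma sum_antidiagonal_fst_add_snd (w : ℕ → ℂ) (n : ℕ) :
    ∑ p ∈ Finset.HasAntidiagonal.antidiagonal n, (1 + w p.1 + w p.2) =
      (n + 1) + 2 * ∑ i ∈ Finset.range (n + 1), w i := by
  have h : ∑ p ∈ Finset.HasAntidiagonal.antidiagonal n, w p.2 =
      ∑ p ∈ Finset.HasAntidiagonal.antidiagonal n, w p.1 := by
    rw [← Finset.Nat.sum_antidiagonal_swap]
    rfl
  rw [Finset.sum_add_distrib, Finset.sum_add_distrib, h,
    Finset.Nat.sum_antidiagonal_eq_sum_range_succ_mk (fun p ↦ w p.1)]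
  simp
  ring

lemma hasSum_sub_shift {w : ℕ → ℂ} (hw : Summable w) (k : ℕ) :
    HasSum (fun b ↦ w b - w (b + k + 1)) (∑ i ∈ Finset.range (k + 1), w i) := by
  have h := hw.sum_add_tsum_nat_add (k + 1)
  have hs := (summable_nat_add_iff (k + 1)).mpr hw
  rw [← eq_sub_iff_add_eq] at h
  rw [h]
  exact hw.hasSum.sub hs.hasSum

lemma hasSum_of_forall_eq {f g : ℕ → ℂ} {a : ℂ} (h : ∀ n, f n = g n) (hg : HasSum g a) :
    HasSum f a := by
  rwa [funext h]

lemma hasSum_of_zero_of_succ {f g : ℕ → ℂ} {a : ℂ} (h0 : f 0 = 0) (h : ∀ n, f (n + 1) = g n)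
    (hg : HasSum g a) : HasSum f a := by
  have := (hasSum_nat_add_iff 1 (f := f) (g := a)).mp (hasSum_of_forall_eq h hg)
  simpa [h0] using this

lemma lambert_mul_lambert {q : ℂ} (hq : ‖q‖ < 1) {a b : ℕ} (ha : a ≠ 0) (hb : b ≠ 0) :
    lambert q a * lambert q b = lambert q (a + b) * (1 + lambert q a + lambert q b) := by
  have h1 := one_sub_pow_ne_zero hq ha
  have h2 := one_sub_pow_ne_zero hq hb
  have h3 := one_sub_pow_ne_zero hq (n := a + b) (by lia)
  simp only [lambert]
  rw [pow_add] at *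
  field_simp
  ring

lemma lambert_mul_lambert_add {q : ℂ} (hq : ‖q‖ < 1) {b k : ℕ} (hb : b ≠ 0) (hk : k ≠ 0) :
    lambert q b * lambert q (b + k) =
      lambert q k * (lambert q b - lambert q (b + k)) - lambert q (b + k) := by
  linear_combination -lambert_mul_lambert hq hb hk

/-- Squaring the Lambert series of `χ₋₃`, before evaluating the coefficients. -/
lemma hasSum_three_mul_sq_tsum_χ₃_lambert {q : ℂ} (hq : ‖q‖ < 1) :
    HasSum (fun k : ℕ ↦ (2 + 2 * traceCoeff (k + 1)) * lambert q (k + 1) ^ 2 -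
        (k * traceCoeff (k + 1) + 2 * ∑ j ∈ Finset.range k, traceCoeff (j + 1)) *
          lambert q (k + 1))
      (3 * (∑' n, χ₃ n * lambert q n) ^ 2) := by
  have hr := norm_nonneg q
  have hpos : 0 < 1 - ‖q‖ := sub_pos.mpr hq
  set C := (1 - ‖q‖)⁻¹
  have hC0 : 0 ≤ C := inv_nonneg.mpr hpos.le
  set x : ℕ → ℂ := fun a ↦ lambert q (a + 1) with hx
  have hxb (a : ℕ) : ‖x a‖ ≤ C * ‖q‖ ^ a := (norm_lambert_le hq _).trans (by
    gcongr ?_ * ?_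
    exact pow_le_pow_of_le_one hr hq.le (Nat.le_succ a))
  have hxs : Summable x := (summable_nat_add_iff 1).mpr (summable_lambert hq)
  have hmul (a b : ℕ) : x a * x b = x (a + b + 1) * (1 + x a + x b) := by
    simp only [hx]
    rw [lambert_mul_lambert hq (Nat.succ_ne_zero a) (Nat.succ_ne_zero b)]
    rw [show a + 1 + (b + 1) = a + b + 1 + 1 by lia]
  have hmul' (b k : ℕ) : x b * x (b + k + 1) = x k * (x b - x (b + k + 1)) - x (b + k + 1) := by
    simp only [hx]
    have := lambert_mul_lambert_add hq (Nat.succ_ne_zero b) (Nat.succ_ne_zero k)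
    simpa only [show b + k + 1 + 1 = b.succ + k.succ by lia] using this
  have hxx (g : ℕ × ℕ → ℂ) (hg : ∀ p, ‖g p‖ ≤ 2) :
      Summable fun p : ℕ × ℕ ↦ g p * (x p.1 * x p.2) := by
    refine summable_prod_of_norm_le (C := 2 * (C * C)) hr hq fun p ↦ ?_
    rw [norm_mul, norm_mul]
    calc _ ≤ 2 * ((C * ‖q‖ ^ p.1) * (C * ‖q‖ ^ p.2)) := by
          gcongr
          exacts [hg p, hxb _, hxb _]
      _ = _ := by ring
  -- the shifted series
  have hL : ∑' n, χ₃ n * lambert q n = ∑' a, χ₃ (a + 1) * x a := by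
    rw [(summable_mul_lambert hq (C := 1) 0 (by simpa using norm_χ₃_le_one)).tsum_eq_zero_add,
      lambert_zero]
    simp [hx]
  have hLs : Summable fun a ↦ ‖χ₃ (a + 1) * x a‖ :=
    ((summable_nat_add_iff 1).mpr
      (summable_mul_lambert hq (C := 1) 0 (by simpa using norm_χ₃_le_one))).norm
  set F : ℕ × ℕ → ℂ := fun p ↦ traceCoeff (p.1 + 1 + 2 * (p.2 + 1)) * (x p.1 * x p.2) with hF
  set G : ℕ × ℕ → ℂ := fun p ↦ traceCoeff (p.1 + 1 + (p.2 + 1)) * (x p.1 * x p.2) with hG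
  have hFs : Summable F := hxx _ fun _ ↦ norm_traceCoeff_le _
  have hGs : Summable G := hxx _ fun _ ↦ norm_traceCoeff_le _
  have hsq : 3 * (∑' n, χ₃ n * lambert q n) ^ 2 = ∑' p, F p - ∑' p, G p := by
    rw [hL, sq, tsum_mul_tsum_of_summable_norm hLs hLs, ← tsum_mul_left, ← hFs.tsum_sub hGs]
    refine tsum_congr fun p ↦ ?_
    simp only [hF, hG]
    linear_combination x p.1 * x p.2 * three_mul_χ₃_mul_χ₃ (p.1 + 1) (p.2 + 1)
  -- the sum over `a + b`
  have hGsum : HasSum (fun k : ℕ ↦ traceCoeff (k + 1) *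
      (x k * (k + 2 * ∑ i ∈ Finset.range k, x i))) (∑' p, G p) := by
    refine hasSum_of_zero_of_succ (by simp) (fun n ↦ ?_) (hasSum_sum_antidiagonal hGs)
    rw [Nat.cast_add, Nat.cast_one, ← sum_antidiagonal_fst_add_snd, Finset.mul_sum,
      Finset.mul_sum]
    refine Finset.sum_congr rfl fun p hp ↦ ?_
    rw [Finset.HasAntidiagonal.mem_antidiagonal] at hp
    simp only [hG]
    rw [hmul, hp, show p.1 + 1 + (p.2 + 1) = n + 1 + 1 by lia]
  -- the sum over `a - b`
  have hUs : Summable fun p : ℕ × ℕ ↦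
      traceCoeff (p.1 + 1) * (x p.1 * (x p.2 - x (p.2 + p.1 + 1))) := by
    refine summable_prod_of_norm_le (C := 2 * (C * (2 * C))) hr hq fun p ↦ ?_
    rw [norm_mul, norm_mul]
    have h1 : ‖x p.2 - x (p.2 + p.1 + 1)‖ ≤ 2 * C * ‖q‖ ^ p.2 := by
      refine (norm_sub_le _ _).trans ?_
      have h2 : ‖x (p.2 + p.1 + 1)‖ ≤ C * ‖q‖ ^ p.2 := (hxb _).trans (by
        gcongr ?_ * ?_
        exact pow_le_pow_of_le_one hr hq.le (by lia))
      linarith [hxb p.2]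
    calc _ ≤ 2 * ((C * ‖q‖ ^ p.1) * (2 * C * ‖q‖ ^ p.2)) := by
          gcongr
          exacts [norm_traceCoeff_le _, hxb _]
      _ = _ := by ring
  have hVs : Summable fun p : ℕ × ℕ ↦ traceCoeff (p.1 + 1) * x (p.2 + p.1 + 1) := by
    refine summable_prod_of_norm_le (C := 2 * C) hr hq fun p ↦ ?_
    rw [norm_mul]
    calc _ ≤ 2 * (C * ‖q‖ ^ (p.1 + p.2)) := by
          gcongr
          · exact norm_traceCoeff_le _
          · refine (hxb _).trans ?_
            gcongr ?_ * ?_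
            exact pow_le_pow_of_le_one hr hq.le (by lia)
      _ = _ := by ring
  have hUsum := hUs.hasSum.prod_fiberwise fun k ↦
    ((hasSum_sub_shift hxs k).mul_left (x k)).mul_left (traceCoeff (k + 1))
  have hVsum : HasSum (fun k : ℕ ↦ (∑ j ∈ Finset.range k, traceCoeff (j + 1)) * x k)
      (∑' p : ℕ × ℕ, traceCoeff (p.1 + 1) * x (p.2 + p.1 + 1)) := by
    refine hasSum_of_zero_of_succ (by simp) (fun n ↦ ?_) (hasSum_sum_antidiagonal hVs)
    rw [← Finset.Nat.sum_antidiagonal_eq_sum_range_succ_mk (fun p ↦ traceCoeff (p.1 + 1)) n,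
      Finset.sum_mul]
    refine Finset.sum_congr rfl fun p hp ↦ ?_
    rw [Finset.HasAntidiagonal.mem_antidiagonal] at hp
    rw [show p.2 + p.1 = n by lia]
  have hFsum : ∑' p, F p = 2 * ∑' a, x a ^ 2 + 2 * (∑' p : ℕ × ℕ,
      traceCoeff (p.1 + 1) * (x p.1 * (x p.2 - x (p.2 + p.1 + 1))) -
        ∑' p : ℕ × ℕ, traceCoeff (p.1 + 1) * x (p.2 + p.1 + 1)) := by
    rw [tsum_prod_eq_tsum_diag_add hFs, ← hUs.tsum_sub hVs]
    · congr 1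
      · rw [← tsum_mul_left]
        refine tsum_congr fun a ↦ ?_
        simp only [hF]
        rw [traceCoeff_congr (n := 0) (by lia)]
        simp [traceCoeff, sq]
      · congr 1
        rw [← (Equiv.prodComm ℕ ℕ).tsum_eq]
        refine tsum_congr fun p ↦ ?_
        simp only [hF, Equiv.prodComm_apply, Prod.fst_swap, Prod.snd_swap]
        rw [traceCoeff_congr (n := p.1 + 1) (by lia), hmul']
        ring
    · intro a b
      simp only [hF]
      rw [traceCoeff_congr (n := b + 1 + 2 * (a + 1)) (by lia)]
      ring
  have hxsq : Summable fun a ↦ x a ^ 2 := (summable_nat_add_iff 1).mpr (summable_lambert_sq hq)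
  rw [hsq, hFsum]
  refine hasSum_of_forall_eq (fun k ↦ ?_)
    (((hxsq.hasSum.mul_left 2).add ((hUsum.sub hVsum).mul_left 2)).sub hGsum)
  rw [Finset.sum_range_succ]
  ring

lemma sum_range_traceCoeff (k : ℕ) : ∑ j ∈ Finset.range k, traceCoeff (j + 1) =
    if (k + 1) % 3 = 0 then -2 else if (k + 1) % 3 = 1 then 0 else -1 := by
  induction k with
  | zero => simp
  | succ k ih =>
    rw [Finset.sum_range_succ, ih, traceCoeff]
    have h : (k + 1 + 1) % 3 = ((k + 1) % 3 + 1) % 3 := by lia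
    have h3 : (k + 1) % 3 < 3 := Nat.mod_lt _ (by norm_num)
    rw [h]
    interval_cases (k + 1) % 3 <;> norm_num

lemma hasSum_ite_mod_three {g : ℕ → ℂ} {a : ℂ} (h : HasSum (fun n ↦ g (3 * n)) a) :
    HasSum (fun n ↦ if n % 3 = 0 then g n else 0) a := by
  have hi : Function.Injective fun n : ℕ ↦ 3 * n := fun _ _ h ↦ by simpa using h
  refine (hi.hasSum_iff fun n hn ↦ if_neg fun h3 ↦ hn ⟨n / 3, ?_⟩).mp
    (hasSum_of_forall_eq (fun n ↦ ?_) h)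
  · simp only
    lia
  · simp

lemma norm_pow_lt_one {q : ℂ} (hq : ‖q‖ < 1) {n : ℕ} (hn : n ≠ 0) : ‖q ^ n‖ < 1 := by
  rw [norm_pow]
  exact pow_lt_one₀ (norm_nonneg _) hq hn

/-- The Lambert series `Σ n qⁿ / (1 - qⁿ)`. -/
noncomputable def lambertP (q : ℂ) : ℂ := ∑' n : ℕ, (n : ℂ) * lambert q n

lemma hasSum_lambertP {q : ℂ} (hq : ‖q‖ < 1) :
    HasSum (fun n : ℕ ↦ (n : ℂ) * lambert q n) (lambertP q) :=
  (summable_natCast_mul_lambert hq).hasSum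

lemma hasSum_lambert_add_sq {q : ℂ} (hq : ‖q‖ < 1) :
    HasSum (fun n : ℕ ↦ lambert q n + lambert q n ^ 2) (lambertP q) := by
  rw [lambertP, tsum_natCast_mul_lambert_eq hq]
  exact ((summable_lambert hq).add (summable_lambert_sq hq)).hasSum

/-- The Lambert series of `χ₋₃`. -/
noncomputable def lambertL (q : ℂ) : ℂ := ∑' n : ℕ, χ₃ n * lambert q n

lemma summable_χ₃_mul_lambert {q : ℂ} (hq : ‖q‖ < 1) : Summable fun n ↦ χ₃ n * lambert q n :=
  summable_mul_lambert hq (C := 1) 0 (by simpa using norm_χ₃_le_one)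

lemma three_mul_lambertL_sq {q : ℂ} (hq : ‖q‖ < 1) :
    3 * lambertL q ^ 2 + lambertL q = lambertP q - 3 * lambertP (q ^ 3) := by
  have hq3 := norm_pow_lt_one hq (n := 3) (by norm_num)
  have h3 := hasSum_ite_mod_three (g := fun n ↦ 6 * (lambert q n + lambert q n ^ 2) -
      3 * (n * lambert q n)) (a := 6 * lambertP (q ^ 3) - 9 * lambertP (q ^ 3)) <| by
    refine hasSum_of_forall_eq (fun n ↦ ?_)
      (((hasSum_lambert_add_sq hq3).mul_left 6).sub ((hasSum_lambertP hq3).mul_left 9))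
    simp only [lambert_pow]
    push_cast
    ring
  have h := ((hasSum_lambertP hq).sub (summable_χ₃_mul_lambert hq).hasSum).add h3
  have h' := hasSum_of_zero_of_succ (f := fun n : ℕ ↦ n * lambert q n - χ₃ n * lambert q n +
      if n % 3 = 0 then 6 * (lambert q n + lambert q n ^ 2) - 3 * (n * lambert q n) else 0)
    (by simp [lambert_zero]) (fun k ↦ ?_) (hasSum_three_mul_sq_tsum_χ₃_lambert hq)
  · have := h.unique h'
    simp only [lambertL] at *
    linear_combination -this
  · rw [sum_range_traceCoeff]
    simp only [traceCoeff, χ₃]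
    push_cast
    have hk : (k + 1) % 3 < 3 := Nat.mod_lt _ (by norm_num)
    interval_cases (k + 1) % 3 <;> norm_num <;> ring

lemma hasSum_natCast_mul_traceCoeff_mul_lambert {q : ℂ} (hq : ‖q‖ < 1) :
    HasSum (fun n : ℕ ↦ n * traceCoeff n * lambert q n)
      (9 * lambertP (q ^ 3) - lambertP q) := by
  have hq3 := norm_pow_lt_one hq (n := 3) (by norm_num)
  have h3 := hasSum_ite_mod_three (g := fun n ↦ 3 * (n * lambert q n))
      (a := 9 * lambertP (q ^ 3)) <| by
    refine hasSum_of_forall_eq (fun n ↦ ?_) ((hasSum_lambertP hq3).mul_left 9)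
    simp only [lambert_pow]
    push_cast
    ring
  refine hasSum_of_forall_eq (fun n ↦ ?_) (h3.sub (hasSum_lambertP hq))
  rw [traceCoeff]
  split_ifs <;> ring

/-- The Lambert term `xᵐ / (1 - x²ᵐ)` at the odd number `m = 2a + 1`. -/
noncomputable def oddLambert (x : ℂ) (a : ℕ) : ℂ :=
  x ^ (2 * a + 1) / (1 - (x ^ 2) ^ (2 * a + 1))

lemma oddLambert_sq {x : ℂ} (hx : ‖x‖ < 1) (a : ℕ) : oddLambert x a ^ 2 =
    lambert (x ^ 2) (2 * a + 1) + lambert (x ^ 2) (2 * a + 1) ^ 2 := by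
  have h := one_sub_pow_ne_zero (norm_pow_lt_one hx two_ne_zero) (Nat.succ_ne_zero (2 * a))
  simp only [oddLambert, lambert]
  rw [Nat.succ_eq_add_one] at h
  field_simp
  ring

lemma oddLambert_mul {x : ℂ} (hx : ‖x‖ < 1) (a b : ℕ) : oddLambert x a * oddLambert x b =
    (lambert (x ^ 2) (a + b + 1) - lambert (x ^ 4) (a + b + 1)) *
      (1 + lambert (x ^ 2) (2 * a + 1) + lambert (x ^ 2) (2 * b + 1)) := by
  have hx2 := norm_pow_lt_one hx two_ne_zero
  have h1 := one_sub_pow_ne_zero hx2 (Nat.succ_ne_zero (2 * a))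
  have h2 := one_sub_pow_ne_zero hx2 (Nat.succ_ne_zero (2 * b))
  have h3 := one_sub_pow_ne_zero hx2 (Nat.succ_ne_zero (a + b))
  have h4 := one_sub_pow_ne_zero (norm_pow_lt_one hx four_ne_zero) (n := (a + b + 1)) (by lia)
  simp only [oddLambert, lambert, Nat.succ_eq_add_one] at *
  set u := (x ^ 2) ^ (a + b + 1) with hu
  have e1 : x ^ (2 * a + 1) * x ^ (2 * b + 1) = u := by rw [hu]; ring
  have e2 : (x ^ 4) ^ (a + b + 1) = u ^ 2 := by rw [hu]; ring
  have e3 : (x ^ 2) ^ (2 * a + 1) * (x ^ 2) ^ (2 * b + 1) = u ^ 2 := by rw [hu]; ring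
  rw [e2] at h4 ⊢
  generalize (x ^ 2) ^ (2 * a + 1) = A at *
  generalize (x ^ 2) ^ (2 * b + 1) = B at *
  rw [div_mul_div_comm, e1]
  field_simp
  linear_combination (1 - u) * u * e3

lemma oddLambert_mul_add {x : ℂ} (hx : ‖x‖ < 1) (b k : ℕ) :
    oddLambert x b * oddLambert x (b + k + 1) =
      (lambert (x ^ 2) (k + 1) - lambert (x ^ 4) (k + 1)) *
        (lambert (x ^ 2) (2 * b + 1) - lambert (x ^ 2) (2 * (b + k + 1) + 1)) := by
  have hx2 := norm_pow_lt_one hx two_ne_zero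
  have h1 := one_sub_pow_ne_zero hx2 (Nat.succ_ne_zero (2 * b))
  have h2 := one_sub_pow_ne_zero hx2 (Nat.succ_ne_zero (2 * (b + k + 1)))
  have h3 := one_sub_pow_ne_zero hx2 (Nat.succ_ne_zero k)
  have h4 := one_sub_pow_ne_zero (norm_pow_lt_one hx four_ne_zero) (n := (k + 1)) (by lia)
  simp only [oddLambert, lambert, Nat.succ_eq_add_one] at *
  set u := (x ^ 2) ^ (k + 1) with hu
  have e1 : x ^ (2 * b + 1) * x ^ (2 * (b + k + 1) + 1) = (x ^ 2) ^ (2 * b + 1) * u := by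
    rw [hu]; ring
  have e2 : (x ^ 4) ^ (k + 1) = u ^ 2 := by rw [hu]; ring
  have e3 : (x ^ 2) ^ (2 * (b + k + 1) + 1) = (x ^ 2) ^ (2 * b + 1) * u ^ 2 := by rw [hu]; ring
  rw [e3] at h2
  rw [div_mul_div_comm, e1, e3]
  rw [e2] at h4 ⊢
  generalize (x ^ 2) ^ (2 * b + 1) = B at *
  field_simp
  ring

lemma norm_oddLambert_le {x : ℂ} (hx : ‖x‖ < 1) (a : ℕ) :
    ‖oddLambert x a‖ ≤ (1 - ‖x‖)⁻¹ * ‖x‖ ^ a := by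
  have h1 : 0 < 1 - ‖x‖ := sub_pos.mpr hx
  have h2 : 1 - ‖x‖ ≤ ‖1 - (x ^ 2) ^ (2 * a + 1)‖ := by
    rw [← pow_mul]
    have h3 : ‖x‖ ^ (2 * (2 * a + 1)) ≤ ‖x‖ :=
      pow_le_of_le_one (norm_nonneg _) hx.le (by lia)
    have h4 := norm_sub_norm_le (1 : ℂ) (x ^ (2 * (2 * a + 1)))
    rw [norm_one, norm_pow] at h4
    linarith
  rw [oddLambert, norm_div, norm_pow, div_eq_inv_mul]
  gcongr ?_ * ?_
  · gcongr
  · exact pow_le_pow_of_le_one (norm_nonneg _) hx.le (by lia)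

lemma summable_mul_oddLambert {x : ℂ} (hx : ‖x‖ < 1) {g : ℕ → ℂ} {C : ℝ}
    (hg : ∀ n, ‖g n‖ ≤ C) : Summable fun a ↦ g a * oddLambert x a := by
  refine summable_of_norm_le_mul_geometric (C := C * (1 - ‖x‖)⁻¹) 0 (norm_nonneg x) hx fun n ↦ ?_
  rw [norm_mul]
  calc _ ≤ C * ((1 - ‖x‖)⁻¹ * ‖x‖ ^ n) :=
        mul_le_mul (hg n) (norm_oddLambert_le hx n) (norm_nonneg _) ((norm_nonneg _).trans (hg n))
    _ = _ := by ring

/-- The odd part of the Lambert series of `χ₋₃`. -/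
noncomputable def lambertOdd (x : ℂ) : ℂ := ∑' a : ℕ, χ₃ (2 * a + 1) * oddLambert x a

lemma hasSum_lambertOdd {x : ℂ} (hx : ‖x‖ < 1) :
    HasSum (fun a ↦ χ₃ (2 * a + 1) * oddLambert x a) (lambertOdd x) :=
  (summable_mul_oddLambert hx fun _ ↦ norm_χ₃_le_one _).hasSum

lemma hasSum_oddLambert_sq {x : ℂ} (hx : ‖x‖ < 1) :
    HasSum (fun a ↦ oddLambert x a ^ 2) (lambertP (x ^ 2) - lambertP (x ^ 4)) := by
  have hx2 := norm_pow_lt_one hx two_ne_zero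
  have hx4 := norm_pow_lt_one hx four_ne_zero
  have hs : Summable fun a ↦ oddLambert x a ^ 2 := by
    simp_rw [sq]
    refine summable_mul_oddLambert hx (C := (1 - ‖x‖)⁻¹) fun a ↦ ?_
    have h1 : 0 < 1 - ‖x‖ := sub_pos.mpr hx
    exact (norm_oddLambert_le hx a).trans
      (mul_le_of_le_one_right (by positivity) (pow_le_one₀ (norm_nonneg _) hx.le))
  have he : HasSum (fun n ↦ lambert (x ^ 2) (2 * n) + lambert (x ^ 2) (2 * n) ^ 2)
      (lambertP (x ^ 4)) := by
    refine hasSum_of_forall_eq (fun n ↦ ?_) (hasSum_lambert_add_sq hx4)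
    rw [← lambert_pow, ← pow_mul]
  have ho : HasSum (fun a ↦ lambert (x ^ 2) (2 * a + 1) + lambert (x ^ 2) (2 * a + 1) ^ 2)
      (∑' a, oddLambert x a ^ 2) :=
    hasSum_of_forall_eq (fun a ↦ (oddLambert_sq hx a).symm) hs.hasSum
  have h := (HasSum.even_add_odd (f := fun n ↦ lambert (x ^ 2) n + lambert (x ^ 2) n ^ 2)
    he ho).unique (hasSum_lambert_add_sq hx2)
  rw [← h, add_sub_cancel_left]
  exact hs.hasSum

lemma lambertL_sub_lambertL_neg {x : ℂ} (hx : ‖x‖ < 1) :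
    lambertL x - lambertL (-x) = 2 * lambertOdd x := by
  have h := (summable_χ₃_mul_lambert hx).hasSum.sub
    (summable_χ₃_mul_lambert (q := -x) (by rwa [norm_neg])).hasSum
  refine h.unique ?_
  rw [← zero_add (2 * lambertOdd x)]
  refine HasSum.even_add_odd ?_ ?_
  · refine hasSum_of_forall_eq (fun n ↦ ?_) hasSum_zero
    simp [lambert, pow_mul]
  · refine hasSum_of_forall_eq (fun n ↦ ?_) ((hasSum_lambertOdd hx).mul_left 2)
    have h1 := one_sub_pow_ne_zero hx (Nat.succ_ne_zero (2 * n))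
    have h2 := one_sub_pow_ne_zero (norm_pow_lt_one hx two_ne_zero) (Nat.succ_ne_zero (2 * n))
    have h3 : 1 + x ^ (2 * n + 1) ≠ 0 := fun h ↦ h2 (by
      rw [Nat.succ_eq_add_one]
      linear_combination (1 - x ^ (2 * n + 1)) * h)
    simp only [lambert, oddLambert, Nat.succ_eq_add_one] at *
    rw [Odd.neg_pow ⟨n, rfl⟩, sub_neg_eq_add]
    have e : (x ^ 2) ^ (2 * n + 1) = (x ^ (2 * n + 1)) ^ 2 := by ring
    rw [e] at h2 ⊢
    field_simp
    ring

/-- Squaring the odd part of the Lambert series of `χ₋₃`. -/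
lemma three_mul_lambertOdd_sq {x : ℂ} (hx : ‖x‖ < 1) :
    3 * lambertOdd x ^ 2 = 2 * ∑' a, oddLambert x a ^ 2 -
      ∑' n : ℕ, (n * traceCoeff n * lambert (x ^ 2) n - n * traceCoeff n * lambert (x ^ 4) n) := by
  have hr := norm_nonneg x
  have hpos : 0 < 1 - ‖x‖ := sub_pos.mpr hx
  have hx2 := norm_pow_lt_one hx two_ne_zero
  set C := (1 - ‖x‖)⁻¹
  have hC0 : 0 ≤ C := inv_nonneg.mpr hpos.le
  set y : ℕ → ℂ := oddLambert x
  set w : ℕ → ℂ := fun a ↦ lambert (x ^ 2) (2 * a + 1)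
  set z : ℕ → ℂ := fun n ↦ lambert (x ^ 2) n - lambert (x ^ 4) n with hz
  have hyb (a : ℕ) : ‖y a‖ ≤ C * ‖x‖ ^ a := norm_oddLambert_le hx a
  have hws : Summable w :=
    (summable_lambert hx2).comp_injective (i := fun a ↦ 2 * a + 1) fun a b h ↦ by simpa using h
  have hmul (a b : ℕ) : y a * y b = z (a + b + 1) * (1 + w a + w b) := oddLambert_mul hx a b
  have hmul' (b k : ℕ) : y b * y (b + k + 1) = z (k + 1) * (w b - w (b + k + 1)) :=
    oddLambert_mul_add hx b k
  have hyy (g : ℕ × ℕ → ℂ) (hg : ∀ p, ‖g p‖ ≤ 2) :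
      Summable fun p : ℕ × ℕ ↦ g p * (y p.1 * y p.2) := by
    refine summable_prod_of_norm_le (C := 2 * (C * C)) hr hx fun p ↦ ?_
    rw [norm_mul, norm_mul]
    calc _ ≤ 2 * ((C * ‖x‖ ^ p.1) * (C * ‖x‖ ^ p.2)) := by
          gcongr
          exacts [hg p, hyb _, hyb _]
      _ = _ := by ring
  have hOs : Summable fun a ↦ ‖χ₃ (2 * a + 1) * y a‖ := (hasSum_lambertOdd hx).summable.norm
  set F : ℕ × ℕ → ℂ :=
    fun p ↦ traceCoeff (2 * p.1 + 1 + 2 * (2 * p.2 + 1)) * (y p.1 * y p.2) with hF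
  set G : ℕ × ℕ → ℂ :=
    fun p ↦ traceCoeff (2 * p.1 + 1 + (2 * p.2 + 1)) * (y p.1 * y p.2) with hG
  have hFs : Summable F := hyy _ fun _ ↦ norm_traceCoeff_le _
  have hGs : Summable G := hyy _ fun _ ↦ norm_traceCoeff_le _
  have hsq : 3 * lambertOdd x ^ 2 = ∑' p, F p - ∑' p, G p := by
    rw [lambertOdd, sq, tsum_mul_tsum_of_summable_norm hOs hOs, ← tsum_mul_left,
      ← hFs.tsum_sub hGs]
    refine tsum_congr fun p ↦ ?_
    simp only [hF, hG]
    linear_combination y p.1 * y p.2 * three_mul_χ₃_mul_χ₃ (2 * p.1 + 1) (2 * p.2 + 1)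
  have hGsum : HasSum (fun n : ℕ ↦ traceCoeff n *
      (z n * (n + 2 * ∑ i ∈ Finset.range n, w i))) (∑' p, G p) := by
    refine hasSum_of_zero_of_succ (by simp) (fun n ↦ ?_) (hasSum_sum_antidiagonal hGs)
    rw [Nat.cast_add, Nat.cast_one, ← sum_antidiagonal_fst_add_snd, Finset.mul_sum,
      Finset.mul_sum]
    refine Finset.sum_congr rfl fun p hp ↦ ?_
    rw [Finset.HasAntidiagonal.mem_antidiagonal] at hp
    simp only [hG]
    rw [hmul, hp, traceCoeff_congr (m := 2 * p.1 + 1 + (2 * p.2 + 1)) (n := n + 1) (by lia)]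
  have hUs : Summable fun p : ℕ × ℕ ↦ traceCoeff (p.1 + 1) * (y p.2 * y (p.2 + p.1 + 1)) := by
    refine summable_prod_of_norm_le (C := 2 * (C * C)) hr hx fun p ↦ ?_
    rw [norm_mul, norm_mul]
    have h1 : ‖y (p.2 + p.1 + 1)‖ ≤ C * ‖x‖ ^ p.1 := (hyb _).trans (by
      gcongr ?_ * ?_
      exact pow_le_pow_of_le_one hr hx.le (by lia))
    calc _ ≤ 2 * ((C * ‖x‖ ^ p.2) * (C * ‖x‖ ^ p.1)) := by
          gcongr
          exacts [norm_traceCoeff_le _, hyb _]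
      _ = _ := by ring
  have hUsum : HasSum (fun n ↦ traceCoeff n * (z n * ∑ i ∈ Finset.range n, w i))
      (∑' p : ℕ × ℕ, traceCoeff (p.1 + 1) * (y p.2 * y (p.2 + p.1 + 1))) := by
    refine hasSum_of_zero_of_succ (by simp) (fun n ↦ rfl) (hUs.hasSum.prod_fiberwise fun k ↦ ?_)
    simp only [hmul']
    exact ((hasSum_sub_shift hws k).mul_left (z (k + 1))).mul_left (traceCoeff (k + 1))
  have hFsum : ∑' p, F p = 2 * ∑' a, y a ^ 2 +
      2 * ∑' p : ℕ × ℕ, traceCoeff (p.1 + 1) * (y p.2 * y (p.2 + p.1 + 1)) := by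
    rw [tsum_prod_eq_tsum_diag_add hFs]
    · congr 1
      · rw [← tsum_mul_left]
        refine tsum_congr fun a ↦ ?_
        simp only [hF]
        rw [traceCoeff_congr (n := 0) (by lia)]
        simp [traceCoeff, sq]
      · congr 1
        rw [← (Equiv.prodComm ℕ ℕ).tsum_eq]
        refine tsum_congr fun p ↦ ?_
        simp only [hF, Equiv.prodComm_apply, Prod.fst_swap, Prod.snd_swap]
        rw [traceCoeff_congr (n := p.1 + 1) (by lia)]
    · intro a b
      simp only [hF]
      rw [traceCoeff_congr (n := 2 * b + 1 + 2 * (2 * a + 1)) (by lia)]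
      ring
  have h := (hGsum.sub (hUsum.mul_left 2)).tsum_eq
  rw [hsq, hFsum, ← sub_eq_zero, ← sub_eq_zero.mpr h]
  simp only [hz]
  rw [tsum_congr fun n : ℕ ↦ show traceCoeff n * ((lambert (x ^ 2) n - lambert (x ^ 4) n) *
      (n + 2 * ∑ i ∈ Finset.range n, w i)) - 2 * (traceCoeff n *
        ((lambert (x ^ 2) n - lambert (x ^ 4) n) * ∑ i ∈ Finset.range n, w i)) =
      n * traceCoeff n * lambert (x ^ 2) n - n * traceCoeff n * lambert (x ^ 4) n by ring]
  ring

lemma lambertOdd_sq {x : ℂ} (hx : ‖x‖ < 1) :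
    lambertOdd x ^ 2 = lambertP (x ^ 2) - 3 * lambertP ((x ^ 2) ^ 3) -
      (lambertP (x ^ 4) - 3 * lambertP ((x ^ 4) ^ 3)) := by
  have h := three_mul_lambertOdd_sq hx
  rw [(hasSum_oddLambert_sq hx).tsum_eq,
    ((hasSum_natCast_mul_traceCoeff_mul_lambert (norm_pow_lt_one hx two_ne_zero)).sub
      (hasSum_natCast_mul_traceCoeff_mul_lambert (norm_pow_lt_one hx four_ne_zero))).tsum_eq] at h
  linear_combination h / 3

lemma qq_natCast_mul (n : ℕ) (τ : ℂ) : qq (n * τ) = qq τ ^ n := by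
  rw [qq, qq, ← Complex.exp_nat_mul]
  ring_nf

lemma qq_add_one (τ : ℂ) : qq (τ + 1) = qq τ := by
  rw [qq, mul_add, mul_one, Complex.exp_add, Complex.exp_two_pi_mul_I, mul_one, qq]

lemma qq_add_one_div_two (τ : ℂ) : qq ((τ + 1) / 2) = -qq (τ / 2) := by
  rw [qq, show 2 * Real.pi * Complex.I * ((τ + 1) / 2) =
    2 * Real.pi * Complex.I * (τ / 2) + Real.pi * Complex.I by ring, Complex.exp_add,
    Complex.exp_pi_mul_I, mul_neg_one, qq]

lemma E₁₃_eq_lambertL {τ : ℂ} (hτ : 0 < τ.im) : E₁₃ τ = 1 / 6 + lambertL (qq τ) := by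
  have hg (n : ℕ) : ‖χ₃ n‖ ≤ n := by
    rcases n with _ | n
    · simp [χ₃]
    · exact (norm_χ₃_le_one _).trans (by simp)
  rw [E₁₃, tsum_divisors_mul_pow_eq_tsum_lambert (norm_qq_lt_one hτ) hg, lambertL]

lemma E₂_eq_lambertP {τ : ℂ} (hτ : 0 < τ.im) : E₂ τ = 1 - 24 * lambertP (qq τ) := by
  simp_rw [E₂, sigmaC, pow_one]
  rw [tsum_divisors_mul_pow_eq_tsum_lambert (norm_qq_lt_one hτ) (by simp), lambertP]

lemma f₃_eq_lambert (j : ℕ) {τ : ℂ} (hτ : 0 < τ.im) :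
    f₃ j τ = 1 + 6 * lambertL (qq τ ^ 2) +
      (-1) ^ j * Complex.I * Real.sqrt 3 * (2 * lambertOdd (qq (τ / 2))) := by
  have h1 : 0 < (2 * τ).im := by simpa using hτ
  have h2 : 0 < (τ / 2).im := by simpa using hτ
  have h3 : 0 < ((τ + 1) / 2).im := by simpa using hτ
  rw [f₃, E₁₃_eq_lambertL h1, E₁₃_eq_lambertL h2, E₁₃_eq_lambertL h3, qq_add_one_div_two,
    ← lambertL_sub_lambertL_neg (norm_qq_lt_one h2), ← Nat.cast_ofNat (R := ℂ) (n := 2),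
    qq_natCast_mul]
  push_cast
  ring

lemma ofReal_sqrt_three_sq : (Real.sqrt 3 : ℂ) ^ 2 = 3 := by
  rw [← Complex.ofReal_pow, Real.sq_sqrt (by norm_num)]
  norm_num

lemma f₃_zero_mul_f₃_one {τ : ℂ} (hτ : 0 < τ.im) : f₃ 0 τ * f₃ 1 τ = E₃₂ τ := by
  have h2 : 0 < (τ / 2).im := by simpa using hτ
  have h3 : 0 < (3 * τ).im := by simpa using hτ
  have hq := norm_qq_lt_one hτ
  set x := qq (τ / 2) with hx
  have hx2 : qq τ = x ^ 2 := by
    rw [hx, ← qq_natCast_mul]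
    push_cast
    ring_nf
  have hq3 : qq (3 * τ) = (x ^ 2) ^ 3 := by
    rw [← hx2, ← qq_natCast_mul]
    norm_num
  have hI := three_mul_lambertL_sq (norm_pow_lt_one hq two_ne_zero)
  have hII := lambertOdd_sq (norm_qq_lt_one h2)
  rw [E₃₂, f₃_eq_lambert 0 hτ, f₃_eq_lambert 1 hτ, E₂_eq_lambertP hτ, E₂_eq_lambertP h3, hq3, hx2]
  rw [hx2, ← pow_mul] at hI
  rw [← hx] at hII
  rw [← pow_mul x 2 2]
  linear_combination 12 * hI + 12 * hII + 4 * lambertOdd x ^ 2 * ofReal_sqrt_three_sq -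
    4 * (Real.sqrt 3 : ℂ) ^ 2 * lambertOdd x ^ 2 * Complex.I_sq

lemma E₂_add_one (τ : ℂ) : E₂ (τ + 1) = E₂ τ := by
  rw [E₂, E₂, qq_add_one]

lemma G2_eq_E₂ (z : UpperHalfPlane) : EisensteinSeries.G2 z = Real.pi ^ 2 / 3 * E₂ z := by
  rw [EisensteinSeries.G2_eq_tsum_cexp, riemannZeta_two, E₂,
    tsum_pnat_eq_tsum_succ (f := fun n ↦ (ArithmeticFunction.sigma 1 n : ℂ) *
      Complex.exp (2 * Real.pi * Complex.I * z) ^ n)]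
  simp only [sigmaC, qq, ArithmeticFunction.sigma_apply, pow_one, Nat.cast_sum]
  ring

/-- The weight two quasimodular transformation law under `τ ↦ -1/τ`. -/
lemma E₂_eq_inversion {τ : ℂ} (hτ : 0 < τ.im) :
    E₂ τ = (τ ^ 2)⁻¹ * E₂ (-τ)⁻¹ + 6 * Complex.I / (Real.pi * τ) := by
  have h := EisensteinSeries.G2_S_transform ⟨τ, hτ⟩
  rw [UpperHalfPlane.modular_S_smul, G2_eq_E₂, G2_eq_E₂] at h
  simp only at h
  have hτ0 : τ ≠ 0 := by
    rintro rfl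
    simp at hτ
  have hpi : (Real.pi : ℂ) ≠ 0 := Complex.ofReal_ne_zero.mpr Real.pi_ne_zero
  have h3 : E₂ τ = 3 / Real.pi ^ 2 * (Real.pi ^ 2 / 3 * E₂ τ) := by field_simp
  rw [h3, h]
  field_simp
  ring

lemma E₃₂_elliptic_point : E₃₂ ((3 + Complex.I * Real.sqrt 3) / 6) = 0 := by
  have hs := ofReal_sqrt_three_sq
  have hI := Complex.I_sq
  have hpi : (Real.pi : ℂ) ≠ 0 := Complex.ofReal_ne_zero.mpr Real.pi_ne_zero
  set ρ : ℂ := (-1 + Complex.I * Real.sqrt 3) / 2 with hρ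
  set τ : ℂ := (3 + Complex.I * Real.sqrt 3) / 6 with hτ
  have hρi : 0 < ρ.im := by simp [hρ]
  have hτi : 0 < τ.im := by simp [hτ]
  have hρ0 : ρ ≠ 0 := by
    intro h
    simp [h] at hρi
  have hρ2 : ρ ^ 2 = -ρ - 1 := by
    rw [hρ]
    linear_combination (Real.sqrt 3 : ℂ) ^ 2 / 4 * hI - hs / 4
  have hτρ : τ * (1 - ρ) = 1 := by
    rw [hτ, hρ]
    linear_combination -(Real.sqrt 3 : ℂ) ^ 2 / 12 * hI + hs / 12
  have hρ1 : 1 - ρ ≠ 0 := right_ne_zero_of_mul_eq_one hτρ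
  have hτe : τ = (1 - ρ)⁻¹ := eq_inv_of_mul_eq_one_left hτρ
  have e1 : (-ρ)⁻¹ = ρ + 1 := by
    refine inv_eq_of_mul_eq_one_right ?_
    linear_combination -hρ2
  have e2 : (-τ)⁻¹ + 1 = ρ := by
    rw [inv_neg, hτe, inv_inv]
    ring
  have e3 : 3 * τ = ρ + 1 + 1 := by
    rw [hτ, hρ]
    ring
  have h1 := E₂_eq_inversion hρi
  have h2 := E₂_eq_inversion hτi
  rw [e1, E₂_add_one] at h1
  rw [← E₂_add_one (-τ)⁻¹, e2, hτe] at h2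
  rw [E₃₂, e3, E₂_add_one, E₂_add_one, hτe, h2]
  generalize E₂ ρ = e at *
  have h3 : e * ρ ^ 2 = e + 6 * Complex.I / Real.pi * ρ := by
    field_simp at h1 ⊢
    linear_combination h1
  rw [inv_pow, inv_inv, ← div_div, div_inv_eq_mul]
  generalize 6 * Complex.I / Real.pi = k at h3 ⊢
  have hk : k = e * (ρ ^ 2 - 1) * ρ ^ 2 := by
    linear_combination -ρ ^ 2 * h3 + k * (1 - ρ) * hρ2
  rw [hk]
  linear_combination e / 2 * (ρ ^ 3 - 2 * ρ ^ 2 + 2) * hρ2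

lemma norm_lambertL_le {q : ℂ} (hq : ‖q‖ < 1) :
    ‖lambertL q‖ ≤ (1 - ‖q‖)⁻¹ * ‖q‖ * (1 - ‖q‖)⁻¹ := by
  have h := (summable_χ₃_mul_lambert hq).tsum_eq_zero_add
  rw [lambert_zero, mul_zero, zero_add] at h
  rw [lambertL, h]
  refine tsum_of_norm_bounded ((hasSum_geometric_of_lt_one (norm_nonneg q) hq).mul_left _)
    fun n ↦ ?_
  rw [norm_mul, mul_assoc, ← pow_succ']
  exact (mul_le_of_le_one_left (norm_nonneg _) (norm_χ₃_le_one _)).trans (norm_lambert_le hq _)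

lemma lambertOdd_neg {x : ℂ} (hx : ‖x‖ < 1) : lambertOdd (-x) = -lambertOdd x := by
  have h1 := lambertL_sub_lambertL_neg hx
  have h2 := lambertL_sub_lambertL_neg (x := -x) (by rwa [norm_neg])
  rw [neg_neg] at h2
  linear_combination -(h1 + h2) / 2

lemma norm_oddLambert_I_mul_le {t : ℝ} (ht : 0 ≤ t) (a : ℕ) :
    ‖oddLambert (Complex.I * t) a‖ ≤ t ^ (2 * a + 1) := by
  have e : 1 - ((Complex.I * t) ^ 2) ^ (2 * a + 1) = ((1 + (t ^ 2) ^ (2 * a + 1) : ℝ) : ℂ) := by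
    rw [mul_pow, Complex.I_sq, neg_one_mul, Odd.neg_pow ⟨a, rfl⟩]
    push_cast
    ring
  rw [oddLambert, e, norm_div, norm_pow, norm_mul, Complex.norm_I, one_mul,
    Complex.norm_of_nonneg ht, Complex.norm_of_nonneg (by positivity)]
  refine div_le_self (by positivity) ?_
  have : 0 ≤ (t ^ 2) ^ (2 * a + 1) := by positivity
  linarith

lemma norm_lambertOdd_I_mul_sub_le {t : ℝ} (ht : 0 ≤ t) (ht1 : t < 1) :
    ‖lambertOdd (Complex.I * t) - Complex.I * (t / (1 + t ^ 2))‖ ≤ t ^ 5 * (1 - t ^ 2)⁻¹ := by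
  have hx : ‖Complex.I * t‖ < 1 := by
    rwa [norm_mul, Complex.norm_I, one_mul, Complex.norm_of_nonneg ht]
  have h := (hasSum_lambertOdd hx).summable.sum_add_tsum_nat_add 2
  have e : ∑ a ∈ Finset.range 2, χ₃ (2 * a + 1) * oddLambert (Complex.I * t) a =
      Complex.I * (t / (1 + t ^ 2)) := by
    simp [Finset.sum_range_succ, χ₃, oddLambert, mul_pow]
    ring
  rw [e] at h
  rw [lambertOdd, ← h, add_sub_cancel_left]
  have ht2 : t ^ 2 < 1 := pow_lt_one₀ ht ht1 two_ne_zero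
  refine tsum_of_norm_bounded ((hasSum_geometric_of_lt_one (sq_nonneg t) ht2).mul_left _)
    fun n ↦ ?_
  rw [norm_mul]
  refine (mul_le_of_le_one_left (norm_nonneg _) (norm_χ₃_le_one _)).trans
    ((norm_oddLambert_I_mul_le ht _).trans (le_of_eq ?_))
  ring

lemma f₃_one_ne_zero : f₃ 1 ((3 + Complex.I * Real.sqrt 3) / 6) ≠ 0 := by
  set τ : ℂ := (3 + Complex.I * Real.sqrt 3) / 6 with hτ
  have hs0 : 0 < Real.sqrt 3 := Real.sqrt_pos.mpr (by norm_num)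
  have hs1 : 1.7 ≤ Real.sqrt 3 := Real.le_sqrt_of_sq_le (by norm_num)
  have hτi : 0 < τ.im := by simp [hτ]
  set t : ℝ := Real.exp (-(Real.pi * Real.sqrt 3 / 6)) with ht
  have ht0 : 0 < t := Real.exp_pos _
  have ht3 : t ^ 2 ≤ 1 / 3 := by
    have h1 : 1.85 ≤ Real.exp (Real.pi * Real.sqrt 3 / 6) := by
      have := Real.add_one_le_exp (Real.pi * Real.sqrt 3 / 6)
      nlinarith [Real.pi_gt_three]
    have h2 : t * Real.exp (Real.pi * Real.sqrt 3 / 6) = 1 := by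
      rw [ht, ← Real.exp_add]
      simp
    nlinarith
  have ht1 : t < 1 := by nlinarith
  have hx : qq (τ / 2) = Complex.I * t := by
    rw [qq, hτ, show 2 * Real.pi * Complex.I * ((3 + Complex.I * Real.sqrt 3) / 6 / 2) =
      Real.pi / 2 * Complex.I + ((-(Real.pi * Real.sqrt 3 / 6) : ℝ) : ℂ) by
        push_cast
        linear_combination Real.pi * Real.sqrt 3 / 6 * Complex.I_sq,
      Complex.exp_add, Complex.exp_pi_div_two_mul_I, ← Complex.ofReal_exp]
  have hq : qq τ ^ 2 = ((t ^ 4 : ℝ) : ℂ) := by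
    rw [show qq τ = qq (τ / 2) ^ 2 by
      rw [← qq_natCast_mul]
      push_cast
      ring_nf, hx, ← pow_mul, mul_pow, Complex.I_pow_four]
    simp
  have hn : ‖qq τ ^ 2‖ = t ^ 4 := by
    rw [hq, Complex.norm_of_nonneg (by positivity)]
  have hL := norm_lambertL_le (norm_pow_lt_one (norm_qq_lt_one hτi) two_ne_zero)
  have hO := norm_lambertOdd_I_mul_sub_le ht0.le ht1
  rw [f₃_eq_lambert 1 hτi, hx]
  rw [hn] at hL
  set l := lambertL (qq τ ^ 2)
  set R := lambertOdd (Complex.I * t) - Complex.I * (t / (1 + t ^ 2)) with hR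
  intro h
  have e : ((1 + 2 * Real.sqrt 3 * (t / (1 + t ^ 2)) : ℝ) : ℂ) =
      -(6 * l) + 2 * Complex.I * Real.sqrt 3 * R := by
    rw [hR]
    push_cast
    linear_combination h + 2 * Real.sqrt 3 * (t / (1 + t ^ 2)) * Complex.I_sq
  have hnorm := congrArg norm e
  rw [Complex.norm_of_nonneg (by positivity)] at hnorm
  have hle := norm_add_le (-(6 * l)) (2 * Complex.I * Real.sqrt 3 * R)
  rw [← hnorm] at hle
  simp only [norm_neg, norm_mul, Complex.norm_I, Complex.norm_of_nonneg hs0.le, mul_one,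
    Complex.norm_ofNat] at hle
  have ht4 : t ^ 4 ≤ 1 / 9 := by nlinarith
  have hinv : (1 - t ^ 4)⁻¹ ≤ 9 / 8 := by
    rw [inv_le_comm₀ (by linarith) (by norm_num)]
    linarith
  have hl : ‖l‖ ≤ 81 / 64 * (1 / 9) := hL.trans (by
    have h0 : 0 ≤ (1 - t ^ 4)⁻¹ := inv_nonneg.mpr (by linarith)
    calc _ ≤ 9 / 8 * (1 / 9) * (9 / 8 : ℝ) := by gcongr
      _ = _ := by norm_num)
  have hR1 : ‖R‖ ≤ t / 6 := hO.trans (by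
    rw [← div_eq_mul_inv, div_le_iff₀ (by linarith)]
    nlinarith [mul_nonneg ht0.le (sub_nonneg.mpr ht3), mul_nonneg ht0.le (sub_nonneg.mpr ht4)])
  have hR2 : t / 6 ≤ t / (1 + t ^ 2) := by
    gcongr
    linarith
  have := mul_le_mul_of_nonneg_left (hR1.trans hR2) (show 0 ≤ 2 * Real.sqrt 3 by positivity)
  linarith

lemma f₃_one_sub_one {τ : ℂ} (hτ : 0 < τ.im) : f₃ 1 (τ - 1) = f₃ 0 τ := by
  have h2 : 0 < (τ / 2).im := by simpa using hτ
  have e1 := qq_add_one (τ - 1)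
  have e2 := qq_add_one_div_two (τ - 1)
  rw [sub_add_cancel] at e1 e2
  rw [f₃_eq_lambert 1 (by simpa using hτ), f₃_eq_lambert 0 hτ, ← e1,
    show qq ((τ - 1) / 2) = -qq (τ / 2) by rw [e2, neg_neg], lambertOdd_neg (norm_qq_lt_one h2)]
  ring

lemma f₃_zero_elliptic_point : f₃ 0 ((3 + Complex.I * Real.sqrt 3) / 6) = 0 := by
  refine (mul_eq_zero.mp ?_).resolve_right f₃_one_ne_zero
  rw [f₃_zero_mul_f₃_one (by simp), E₃₂_elliptic_point]

theorem stmt15 :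
    (∀ τ : ℂ, 0 < τ.im → f₃ 0 τ * f₃ 1 τ = E₃₂ τ) ∧
    (∀ j : ℕ, j < 2 → f₃ j (((-1 : ℂ) ^ j * 3 + Complex.I * Real.sqrt 3) / 6) = 0) := by
  refine ⟨fun τ hτ ↦ f₃_zero_mul_f₃_one hτ, fun j hj ↦ ?_⟩
  interval_cases j
  · simpa using f₃_zero_elliptic_point
  · rw [← f₃_zero_elliptic_point, ← f₃_one_sub_one (by simp)]
    congr 1
    ring
end
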